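/- arXiv:2402.17795 — 3 statements merged into one kernel-verified Lean document; each statement's English description precedes it below -/
import Mathlib

section
/- Let a : ℝ → [0,1] with √a κ-Lipschitz, and H ∈ 𝓗(α0,α1,γ) with γ > 2. Let λ0 := inf{μ ∈ ℝ : the equation a(x)u'' + H(x,u') = μ admits a continuous viscosity supersolution on ℝ}, and let λ ≥ λ0. Then there exists a viscosity solution u of a(x)u'' + H(x,u') = λ on ℝ; moreover u is K-Lipschitz, where K = C((κ√(1+α1+|λ|)/α0)^{2/(γ−1)} + ((1+λα0)/α0²)^{1/γ}) with C depending only on γ, and u is of class C² on every open interval contained in {a > 0}. Furthermore λ0 ≥ inf H ≥ −1/α0. -/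
open Real Set Filter Topology MeasureTheory

noncomputable section

/-- The Hamiltonian class `𝓗(α₀, α₁, γ)`: growth condition (H1) and the local
Lipschitz conditions (H2), (H3). -/
def HamClass (a0 a1 g : ℝ) (H : ℝ → ℝ → ℝ) : Prop :=
  (∀ x p : ℝ, a0 * |p| ^ g - 1 / a0 ≤ H x p) ∧
  (∀ x p : ℝ, H x p ≤ a1 * (|p| ^ g + 1)) ∧
  (∀ x p q : ℝ, |H x p - H x q| ≤ a1 * (|p| + |q| + 1) ^ (g - 1) * |p - q|) ∧
  (∀ x y p : ℝ, |H x p - H y p| ≤ a1 * (|p| ^ g + 1) * |x - y|)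

/-- The strictly quasiconvex class `𝓗_sqc(α₀, α₁, γ, η)` with (unique) minimizer map
`phat`. -/
def HamSqc (a0 a1 g eta : ℝ) (H : ℝ → ℝ → ℝ) (phat : ℝ → ℝ) : Prop :=
  HamClass a0 a1 g H ∧
  (∀ x p : ℝ, H x (phat x) ≤ H x p) ∧
  (∀ x p : ℝ, (∀ q : ℝ, H x p ≤ H x q) → p = phat x) ∧
  (∀ x p1 p2 : ℝ, p1 < p2 → p2 ≤ phat x → eta * |p1 - p2| ≤ H x p1 - H x p2) ∧
  (∀ x p1 p2 : ℝ, phat x ≤ p1 → p1 < p2 → eta * |p1 - p2| ≤ H x p2 - H x p1)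

/-- A continuous `u` is a viscosity supersolution of `a(x) u'' + H(x, u') = lam` on `U`:
at every local minimum point `x0 ∈ U` of `u - φ`, with `φ` of class `C²`, one has
`a(x0) φ''(x0) + H(x0, φ'(x0)) ≤ lam`. -/
def ViscSuperOn (a : ℝ → ℝ) (H : ℝ → ℝ → ℝ) (lam : ℝ) (U : Set ℝ) (u : ℝ → ℝ) : Prop :=
  ∀ φ : ℝ → ℝ, ContDiff ℝ 2 φ → ∀ x0 ∈ U, IsLocalMin (fun x => u x - φ x) x0 →
    a x0 * deriv (deriv φ) x0 + H x0 (deriv φ x0) ≤ lam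

/-- Viscosity subsolution of `a(x) u'' + H(x, u') = lam` on `U`. -/
def ViscSubOn (a : ℝ → ℝ) (H : ℝ → ℝ → ℝ) (lam : ℝ) (U : Set ℝ) (u : ℝ → ℝ) : Prop :=
  ∀ φ : ℝ → ℝ, ContDiff ℝ 2 φ → ∀ x0 ∈ U, IsLocalMax (fun x => u x - φ x) x0 →
    lam ≤ a x0 * deriv (deriv φ) x0 + H x0 (deriv φ x0)

/-- Viscosity solution of `a(x) u'' + H(x, u') = lam` on `U`. -/
def ViscSolOn (a : ℝ → ℝ) (H : ℝ → ℝ → ℝ) (lam : ℝ) (U : Set ℝ) (u : ℝ → ℝ) : Prop :=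
  ViscSubOn a H lam U u ∧ ViscSuperOn a H lam U u

/-- The critical value `λ₀`: the infimum of the levels `lam` at which the stationary
equation `a u'' + H(x, u') = lam` admits a continuous viscosity supersolution on `ℝ`. -/
def CriticalValue (a : ℝ → ℝ) (H : ℝ → ℝ → ℝ) : ℝ :=
  sInf {lam : ℝ | ∃ u : ℝ → ℝ, Continuous u ∧ ViscSuperOn a H lam Set.univ u}

/-- Condition (A1'): `a ≢ 0` and every connected component of `A := {a > 0}` is bounded
(components of an open subset of `ℝ` are automatically open intervals). -/
def CondA1' (a : ℝ → ℝ) : Prop :=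
  (∃ x, a x ≠ 0) ∧
  ∀ x, 0 < a x → Bornology.IsBounded (connectedComponentIn {y : ℝ | 0 < a y} x)

/-!
A power barrier `-c (z - x₀) ^ (-m)` tests a supersolution with infinite slope near `x₀`; since `H`
is coercive and superlinear in the slope, this bounds the slopes of every supersolution, with a
constant independent of `a`.

Solutions are limits of approximants `P` solving the uniformly elliptic ODE
`(√a + ε)² P'' + H(x, P') = L` on `[-T, T]` with `L > λ` and a large slope at `-T`. Coercivity keeps
`P'` bounded above. A supersolution `v` at a level below `L` keeps it bounded below: if `P'` went
from above `Lip v` to below `-Lip v`, then `v(y) - P(x) + (x - y)² / (2ε)` would have an interior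
minimum, and moving `(x, y)` there along `(t, 1)`, with `t²` the ratio of the diffusion coefficients
at `x` and `y`, makes the viscosity inequality for `v` contradict the
equation for `P` up to `O(ε)`, because `√a` is Lipschitz. The slope bounds give compactness as
`ε → 0`, `L → λ`, `T → ∞`, and where `a > 0` the equation itself bounds `P''`, so the convergence is
in `C¹` and the limit is classical.
-/

open scoped NNReal

/-! ### Calculus on the line -/

theorem deriv_deriv_nonneg_of_isLocalMin {f : ℝ → ℝ} {x : ℝ} (hf : ContinuousAt f x)
    (hmin : IsLocalMin f x) : 0 ≤ deriv (deriv f) x := by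
  by_contra! hneg
  have hmax : IsLocalMax f x := isLocalMax_of_deriv_deriv_neg hneg hmin.deriv_eq_zero hf
  have hconst : f =ᶠ[𝓝 x] fun _ => f x := by
    filter_upwards [hmin, hmax] with y hle hge using le_antisymm hge hle
  rw [hconst.deriv.deriv_eq] at hneg
  simp at hneg

section

variable {f g : ℝ → ℝ} {x : ℝ}

theorem deriv_sub_fun_of_contDiff (hf : ContDiff ℝ 2 f) (hg : ContDiff ℝ 2 g) :
    deriv (fun y => f y - g y) = fun y => deriv f y - deriv g y :=
  funext fun y => deriv_fun_sub (hf.differentiable two_ne_zero y) (hg.differentiable two_ne_zero y)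

theorem deriv_eq_of_isLocalMin_sub (hf : ContDiff ℝ 2 f) (hg : ContDiff ℝ 2 g)
    (hmin : IsLocalMin (fun y => f y - g y) x) : deriv f x = deriv g x := by
  have := hmin.deriv_eq_zero
  rw [deriv_sub_fun_of_contDiff hf hg] at this
  exact sub_eq_zero.1 this

theorem deriv_deriv_le_of_isLocalMin_sub (hf : ContDiff ℝ 2 f) (hg : ContDiff ℝ 2 g)
    (hmin : IsLocalMin (fun y => f y - g y) x) :
    deriv (deriv g) x ≤ deriv (deriv f) x := by
  have := deriv_deriv_nonneg_of_isLocalMin (hf.sub hg).continuous.continuousAt hmin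
  rw [deriv_sub_fun_of_contDiff hf hg, deriv_fun_sub (hf.differentiable_deriv_two x)
    (hg.differentiable_deriv_two x)] at this
  exact sub_nonneg.1 this

theorem contDiffOn_two_of_hasDerivAt {s : Set ℝ} (hs : IsOpen s) {f' f'' : ℝ → ℝ}
    (hf : ∀ x ∈ s, HasDerivAt f (f' x) x) (hf' : ∀ x ∈ s, HasDerivAt f' (f'' x) x)
    (hf'' : ContinuousOn f'' s) : ContDiffOn ℝ 2 f s := by
  have hC1 : ContDiffOn ℝ 1 f' s := by
    rw [← zero_add (1 : WithTop ℕ∞), contDiffOn_succ_iff_deriv_of_isOpen hs]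
    refine ⟨fun x hx => (hf' x hx).differentiableAt.differentiableWithinAt, by simp, ?_⟩
    exact contDiffOn_zero.2 (hf''.congr fun x hx => (hf' x hx).deriv)
  rw [← one_add_one_eq_two, contDiffOn_succ_iff_deriv_of_isOpen hs]
  exact ⟨fun x hx => (hf x hx).differentiableAt.differentiableWithinAt, by simp,
    hC1.congr fun x hx => (hf x hx).deriv⟩

end

/-! ### Viscosity supersolutions -/

section

variable {a : ℝ → ℝ} {H : ℝ → ℝ → ℝ} {lam : ℝ} {U : Set ℝ} {u : ℝ → ℝ}

theorem exists_contDiff_eventuallyEq_of_contDiffAt {φ : ℝ → ℝ} {x : ℝ} (hφ : ContDiffAt ℝ 2 φ x) :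
    ∃ ψ : ℝ → ℝ, ContDiff ℝ 2 ψ ∧ ψ =ᶠ[𝓝 x] φ := by
  obtain ⟨r, hr, hball⟩ := Metric.nhds_basis_closedBall.eventually_iff.1 (hφ.eventually (by simp))
  let χ : ContDiffBump x := ⟨r / 2, r, half_pos hr, half_lt_self hr⟩
  refine ⟨fun y => χ y * φ y, contDiff_iff_contDiffAt.2 fun y => ?_, ?_⟩
  · by_cases hy : y ∈ Metric.closedBall x r
    · exact χ.contDiffAt.mul (hball hy)
    · have hsupp : y ∉ tsupport χ := by rwa [χ.tsupport_eq]
      refine (contDiffAt_const (c := (0 : ℝ))).congr_of_eventuallyEq ?_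
      filter_upwards [notMem_tsupport_iff_eventuallyEq.1 hsupp] with z hz
      simp [hz]
  · filter_upwards [χ.eventuallyEq_one] with y hy
    simp [hy]

theorem ViscSuperOn.le_of_contDiffAt (hu : ViscSuperOn a H lam U u) {φ φ' : ℝ → ℝ} {φ'' x : ℝ}
    (hx : x ∈ U) (hφ : ContDiffAt ℝ 2 φ x) (hφ' : ∀ᶠ y in 𝓝 x, HasDerivAt φ (φ' y) y)
    (hφ'' : HasDerivAt φ' φ'' x) (hmin : IsLocalMin (fun y => u y - φ y) x) :
    a x * φ'' + H x (φ' x) ≤ lam := by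
  obtain ⟨ψ, hψ, hψφ⟩ := exists_contDiff_eventuallyEq_of_contDiffAt hφ
  have hderiv : deriv ψ =ᶠ[𝓝 x] φ' := hψφ.deriv.trans (hφ'.mono fun _ hy => hy.deriv)
  have hmin' : IsLocalMin (fun y => u y - ψ y) x :=
    hmin.congr (hψφ.mono fun y hy => by simp only [hy])
  have := hu ψ hψ x hx hmin'
  rwa [hderiv.deriv_eq, hφ''.deriv, hderiv.eq_of_nhds] at this

theorem ViscSuperOn.comp_neg (hu : ViscSuperOn a H lam U u) :
    ViscSuperOn (fun x => a (-x)) (fun x p => H (-x) (-p)) lam (Neg.neg ⁻¹' U)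
      (fun x => u (-x)) := by
  intro φ hφ x hx hmin
  have hmin' : IsLocalMin (fun y => u y - φ (-y)) (-x) := by
    have htend : Tendsto Neg.neg (𝓝 (-x)) (𝓝 x) := by simpa using (continuous_neg.tendsto (-x))
    simpa [IsLocalMin, IsMinFilter] using htend.eventually hmin
  have hderiv : deriv (fun y => φ (-y)) = fun y => -deriv φ (-y) :=
    funext fun _ => deriv_comp_neg ..
  simpa [hderiv, deriv_comp_neg (deriv φ)] using
    hu (fun y => φ (-y)) (hφ.comp contDiff_neg) (-x) hx hmin'

theorem ViscSuperOn.viscSubOn_neg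
    (hu : ViscSuperOn a (fun x p => -H x (-p)) (-lam) U fun x => -u x) : ViscSubOn a H lam U u := by
  intro φ hφ x hx hmax
  have hmin : IsLocalMin (fun y => -u y - -φ y) x := by
    refine hmax.neg.congr (.of_forall fun y => ?_)
    simp only [neg_sub, sub_neg_eq_add]
    ring
  have hneg : deriv (fun y => -φ y) = fun y => -deriv φ y := funext fun _ => deriv.fun_neg
  have := hu _ hφ.neg x hx hmin
  simp only [hneg, deriv.fun_neg, neg_neg] at this
  linarith

theorem viscSuperOn_const (ha : ∀ x, 0 ≤ a x) (hH : ∀ x, H x 0 ≤ lam) (c : ℝ) :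
    ViscSuperOn a H lam U fun _ => c := by
  intro φ hφ x _ hmin
  have hd := deriv_eq_of_isLocalMin_sub contDiff_const hφ hmin
  have hdd := deriv_deriv_le_of_isLocalMin_sub contDiff_const hφ hmin
  simp only [deriv_const', deriv_const] at hd hdd
  rw [← hd]
  nlinarith [ha x, hH x]

end

/-! ### Lipschitz estimate for supersolutions -/

/-- The barrier `t ↦ -c t ^ (-m)` on `(0, ∞)`, which tests supersolutions in the Lipschitz estimate.
The constant `c = b ^ (m + 1) / m` makes `(b / t) ^ (m + 1)` its derivative. -/
def powerBarrier (b m t : ℝ) : ℝ := -(b ^ (m + 1) / m) * t ^ (-m)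

section

variable {b m t : ℝ}

theorem contDiffAt_powerBarrier (ht : 0 < t) : ContDiffAt ℝ 2 (powerBarrier b m) t :=
  contDiffAt_const.mul (contDiffAt_id.rpow_const_of_ne ht.ne')

theorem hasDerivAt_powerBarrier (hm : m ≠ 0) (ht : 0 < t) :
    HasDerivAt (powerBarrier b m) (b ^ (m + 1) * t ^ (-(m + 1))) t := by
  refine ((Real.hasDerivAt_rpow_const (.inl ht.ne')).const_mul _).congr_deriv ?_
  rw [show -m - 1 = -(m + 1) by ring]
  field_simp

theorem hasDerivAt_deriv_powerBarrier (ht : 0 < t) :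
    HasDerivAt (fun t => b ^ (m + 1) * t ^ (-(m + 1)))
      (-((m + 1) * (b ^ (m + 1) * t ^ (-(m + 2))))) t := by
  refine ((Real.hasDerivAt_rpow_const (.inl ht.ne')).const_mul _).congr_deriv ?_
  rw [show -(m + 1) - 1 = -(m + 2) by ring]
  ring

theorem tendsto_powerBarrier_nhdsGT_zero (hb : 0 < b) (hm : 0 < m) :
    Tendsto (powerBarrier b m) (𝓝[>] 0) atBot :=
  (tendsto_rpow_neg_nhdsGT_zero (neg_lt_zero.2 hm)).const_mul_atTop_of_neg
    (neg_lt_zero.2 (by positivity))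

theorem tendsto_powerBarrier_atTop (hm : 0 < m) : Tendsto (powerBarrier b m) atTop (𝓝 0) :=
  mul_zero (-(b ^ (m + 1) / m)) ▸ (tendsto_rpow_neg_atTop hm).const_mul _

end

theorem rpow_le_one_add_rpow {y p q : ℝ} (hy : 0 ≤ y) (hp : 0 ≤ p) (hpq : p ≤ q) :
    y ^ p ≤ 1 + y ^ q := by
  rcases le_total y 1 with h | h
  · linarith [Real.rpow_le_one hy h hp, Real.rpow_nonneg hy q]
  · linarith [Real.rpow_le_rpow_of_exponent_le h hpq]

/- With `y = b / t` the claim reads `A (m + 1) / b * y ^ (m + 2) < δ + α * y ^ ((m + 1) * γ)`, and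
`m = 1 / (γ - 1)` makes the exponent on the right the larger one. -/
theorem exists_powerBarrier_strict_ineq {γ δ α : ℝ} (A : ℝ) (hγ : 1 < γ) (hδ : 0 < δ)
    (hα : 0 < α) :
    ∃ b m : ℝ, 0 < b ∧ 0 < m ∧ ∀ t, 0 < t →
      A * ((m + 1) * (b ^ (m + 1) * t ^ (-(m + 2)))) <
        δ + α * (b ^ (m + 1) * t ^ (-(m + 1))) ^ γ := by
  have hγ' : 0 < γ - 1 := sub_pos.2 hγ
  set m := 1 / (γ - 1)
  have hm : 0 < m := by positivity
  have hexp : m + 2 ≤ (m + 1) * γ := by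
    have : m * (γ - 1) = 1 := one_div_mul_cancel hγ'.ne'
    nlinarith [sq_nonneg (γ - 1), mul_pos hm hγ']
  have hmin : 0 < min δ α := lt_min hδ hα
  set b := |A| * (m + 1) / min δ α + 1
  have hb : 0 < b := by positivity
  refine ⟨b, m, hb, hm, fun t ht => ?_⟩
  have hy : 0 < b / t := by positivity
  have hderiv : b ^ (m + 1) * t ^ (-(m + 1)) = (b / t) ^ (m + 1) := by
    rw [Real.div_rpow hb.le ht.le, Real.rpow_neg ht.le, div_eq_mul_inv]
  have hderiv' : b ^ (m + 1) * t ^ (-(m + 2)) = (b / t) ^ (m + 2) / b := by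
    rw [Real.div_rpow hb.le ht.le, Real.rpow_neg ht.le, show m + 2 = m + 1 + 1 by ring,
      Real.rpow_add_one hb.ne' (m + 1)]
    generalize b ^ (m + 1) = c
    field_simp
  rw [hderiv, hderiv', ← Real.rpow_mul hy.le]
  have hAb : |A| * (m + 1) / b < min δ α := by
    rw [div_lt_iff₀ hb]
    linarith [show min δ α * b = |A| * (m + 1) + min δ α by simp only [b]; field_simp]
  calc A * ((m + 1) * ((b / t) ^ (m + 2) / b))
      = A * ((m + 1) * (b / t) ^ (m + 2) / b) := by ring
    _ ≤ |A| * ((m + 1) * (b / t) ^ (m + 2) / b) := by gcongr; exact le_abs_self A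
    _ = |A| * (m + 1) / b * (b / t) ^ (m + 2) := by ring
    _ < min δ α * (b / t) ^ (m + 2) := by gcongr
    _ ≤ min δ α * (1 + (b / t) ^ ((m + 1) * γ)) := by
        gcongr; exact rpow_le_one_add_rpow hy.le (by positivity) hexp
    _ = min δ α + min δ α * (b / t) ^ ((m + 1) * γ) := by ring
    _ ≤ δ + α * (b / t) ^ ((m + 1) * γ) := by
        gcongr
        exacts [min_le_left _ _, min_le_right _ _]

/- The pole of `ψ` is placed so far to the left of `x` that `ψ` is almost constant on `[x, y]`. -/
theorem exists_isLocalMin_sub_barrier {u ψ : ℝ → ℝ} {r x y l : ℝ} (hu : Continuous u)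
    (hψ : ContinuousOn ψ (Ioi 0)) (hψ_zero : Tendsto ψ (𝓝[>] 0) atBot)
    (hψ_top : Tendsto ψ atTop (𝓝 l)) (hxy : x < y) (h : r * (y - x) < u y - u x) :
    ∃ c z, c < z ∧ IsLocalMin (fun z => u z - (r * z + ψ (z - c))) z := by
  have hflat : Tendsto (fun D => ψ (D + (y - x)) - ψ D) atTop (𝓝 0) := by
    simpa using (hψ_top.comp (tendsto_atTop_add_const_right _ (y - x) tendsto_id)).sub hψ_top
  obtain ⟨D, hD, hD0⟩ :=
    ((hflat.eventually_lt_const (sub_pos.2 h)).and (eventually_gt_atTop 0)).exists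
  set c := x - D
  set F := fun z => u z - (r * z + ψ (z - c))
  have hFxy : F x < F y := by
    simp only [F, c, sub_sub_cancel, show y - (x - D) = D + (y - x) by ring]
    linarith
  have hF : ContinuousOn F (Ioi c) := by
    refine hu.continuousOn.sub ((continuousOn_const.mul continuousOn_id).add ?_)
    exact hψ.comp (by fun_prop) fun z (hz : c < z) => sub_pos.2 hz
  have hFc : Tendsto F (𝓝[>] c) atTop := by
    have hshift : Tendsto (fun z => z - c) (𝓝[>] c) (𝓝[>] 0) := by
      refine tendsto_nhdsWithin_iff.2
        ⟨?_, eventually_mem_nhdsWithin.mono fun z (hz : c < z) => sub_pos.2 hz⟩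
      exact (((continuous_id.sub continuous_const).tendsto' c 0 (sub_self c))).mono_left inf_le_left
    have hreg : Tendsto (fun z => u z - r * z) (𝓝[>] c) (𝓝 (u c - r * c)) :=
      ((hu.sub (continuous_const.mul continuous_id)).tendsto c).mono_left inf_le_left
    refine (hreg.add_atTop (tendsto_neg_atBot_atTop.comp (hψ_zero.comp hshift))).congr fun z => ?_
    simp only [F, Function.comp_apply]
    ring
  obtain ⟨c', hFc', hcc', hc'x⟩ :=
    ((hFc.eventually_gt_atTop (F x)).and (Ioo_mem_nhdsGT (sub_lt_self x hD0))).exists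
  obtain ⟨z, hz, hmin⟩ := isCompact_Icc.exists_isLocalMin_mem_open (s := Ioo c' y)
    Ioo_subset_Icc_self (hF.mono fun z hz => hcc'.trans_le hz.1) ⟨hc'x.le, hxy.le⟩ (by
      rw [Icc_sdiff_Ioo_same (hc'x.trans hxy).le]
      rintro z (rfl | rfl) <;> assumption) isOpen_Ioo
  exact ⟨c, z, hcc'.trans hz.1, hmin⟩

section

variable {a u : ℝ → ℝ} {H : ℝ → ℝ → ℝ} {A α β γ mu : ℝ} {r : ℝ≥0}

theorem ViscSuperOn.sub_le_mul_sub (hu : ViscSuperOn a H mu univ u) (huc : Continuous u)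
    (ha : ∀ x, a x ≤ A) (hα : 0 < α) (hγ : 1 < γ) (hH : ∀ x p, α * |p| ^ γ - β ≤ H x p)
    (hr : mu + β ≤ α * (r : ℝ) ^ γ) {x y : ℝ} (hxy : x < y) : u y - u x ≤ r * (y - x) := by
  by_contra! hlt
  obtain ⟨ρ, hrρ, hρ⟩ := exists_between ((lt_div_iff₀ (sub_pos.2 hxy)).2 hlt)
  have hρ0 : 0 ≤ ρ := r.2.trans hrρ.le
  have hδ : 0 < α * ρ ^ γ - (mu + β) := by
    have : α * (r : ℝ) ^ γ < α * ρ ^ γ := by gcongr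
    linarith
  obtain ⟨b, m, hb, hm, hbar⟩ := exists_powerBarrier_strict_ineq A hγ hδ hα
  obtain ⟨c, z, hcz, hmin⟩ := exists_isLocalMin_sub_barrier (ψ := powerBarrier b m) huc
    (fun t ht => (contDiffAt_powerBarrier ht).continuousAt.continuousWithinAt)
    (tendsto_powerBarrier_nhdsGT_zero hb hm) (tendsto_powerBarrier_atTop hm) hxy
    ((lt_div_iff₀ (sub_pos.2 hxy)).1 hρ)
  have ht : 0 < z - c := sub_pos.2 hcz
  set s := b ^ (m + 1) * (z - c) ^ (-(m + 1))
  set s' := (m + 1) * (b ^ (m + 1) * (z - c) ^ (-(m + 2)))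
  have htest : a z * -s' + H z (ρ + s) ≤ mu := by
    refine hu.le_of_contDiffAt (φ' := fun z => ρ + b ^ (m + 1) * (z - c) ^ (-(m + 1))) (mem_univ z)
      ?_ ?_ (((hasDerivAt_deriv_powerBarrier ht).comp_sub_const z c).const_add ρ) hmin
    · exact (contDiffAt_const.mul contDiffAt_id).add
        ((contDiffAt_powerBarrier ht).comp z (f := fun z => z - c) (by fun_prop))
    · filter_upwards [Ioi_mem_nhds hcz] with w hw
      simpa using ((hasDerivAt_id w).const_mul ρ).fun_add
        ((hasDerivAt_powerBarrier hm.ne' (sub_pos.2 hw)).comp_sub_const w c)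
  have hs : 0 ≤ s := by positivity
  have hcoercive := hH z (ρ + s)
  rw [abs_of_nonneg (by positivity)] at hcoercive
  have hsuper : α * (ρ ^ γ + s ^ γ) ≤ α * (ρ + s) ^ γ := by
    gcongr; exact Real.add_rpow_le_rpow_add hρ0 hs hγ.le
  have hdiff : a z * s' ≤ A * s' := by gcongr; exact ha z
  linarith [hbar _ ht]

theorem ViscSuperOn.lipschitzWith (hu : ViscSuperOn a H mu univ u) (huc : Continuous u)
    (ha : ∀ x, a x ≤ A) (hα : 0 < α) (hγ : 1 < γ) (hH : ∀ x p, α * |p| ^ γ - β ≤ H x p)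
    (hr : mu + β ≤ α * (r : ℝ) ^ γ) : LipschitzWith r u := by
  have hreflect : ∀ x p, α * |p| ^ γ - β ≤ H (-x) (-p) := fun x p => by simpa using hH (-x) (-p)
  refine LipschitzWith.of_le_add_mul r fun x y => ?_
  rw [Real.dist_eq, ← sub_le_iff_le_add']
  rcases lt_trichotomy x y with hxy | rfl | hxy
  · simpa [abs_of_neg (sub_neg.2 hxy), neg_add_eq_sub] using
      hu.comp_neg.sub_le_mul_sub (huc.comp continuous_neg) (fun x => ha (-x)) hα hγ hreflect hr
        (neg_lt_neg hxy)
  · simp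
  · simpa [abs_of_pos (sub_pos.2 hxy)] using hu.sub_le_mul_sub huc ha hα hγ hH hr hxy

end

section

variable {a u : ℝ → ℝ} {H : ℝ → ℝ → ℝ} {A m mu : ℝ} {K : ℝ≥0}

theorem exists_isLocalMin_add_mul_sq (hu : LipschitzWith K u) {e : ℝ} (he : 0 < e) :
    ∃ x, IsLocalMin (fun x => u x - -(e * x ^ 2)) x := by
  have hcont : Continuous fun x => u x - -(e * x ^ 2) := by
    have := hu.continuous
    fun_prop
  obtain ⟨x, hx⟩ := hcont.exists_forall_le' 0 <| by
    filter_upwards [(tendsto_norm_cocompact_atTop (E := ℝ)).eventually_ge_atTop (K / e)] with x hx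
    have hLip : u 0 - u x ≤ K * |x| := by
      simpa [Real.dist_eq] using (le_abs_self _).trans (hu.dist_le_mul 0 x)
    rw [Real.norm_eq_abs, div_le_iff₀' he] at hx
    nlinarith [sq_abs x, abs_nonneg x]
  exact ⟨x, .of_forall hx⟩

theorem ViscSuperOn.le_of_forall_le (hu : ViscSuperOn a H mu univ u) (hLip : LipschitzWith K u)
    (ha : ∀ x, a x ≤ A) (hm : ∀ x p, m ≤ H x p) : m ≤ mu := by
  have hlim : Tendsto (fun e => mu + A * (2 * e)) (𝓝[>] 0) (𝓝 mu) := by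
    refine ((?_ : Continuous _).tendsto' 0 mu (by simp)).mono_left inf_le_left
    fun_prop
  refine ge_of_tendsto hlim (eventually_mem_nhdsWithin.mono fun e (he : 0 < e) => ?_)
  obtain ⟨x, hmin⟩ := exists_isLocalMin_add_mul_sq hLip he
  have htest : a x * -(2 * e) + H x (-(2 * e * x)) ≤ mu := by
    refine hu.le_of_contDiffAt (φ' := fun y => -(2 * e * y)) (mem_univ x) (by fun_prop)
      (.of_forall fun y => ?_) ?_ hmin
    · exact ((hasDerivAt_pow 2 y).const_mul e).fun_neg.congr_deriv (by push_cast; ring)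
    · simpa using ((hasDerivAt_id x).const_mul (2 * e)).fun_neg
  have : a x * (2 * e) ≤ A * (2 * e) := by gcongr; exact ha x
  linarith [hm x (-(2 * e * x))]

end

/-! ### Doubling of variables -/

theorem mul_sub_nonpos_of_isMaxOn {h : ℝ → ℝ} {h' x y : ℝ} {s : Set ℝ} (hh : HasDerivAt h h' x)
    (hmax : IsMaxOn h s x) (hs : segment ℝ x y ⊆ s) : h' * (y - x) ≤ 0 := by
  simpa [mul_comm] using hmax.localize.hasFDerivWithinAt_nonpos hh.hasFDerivAt.hasFDerivWithinAt
    (sub_mem_posTangentConeAt_of_segment_subset hs)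

theorem mem_Ioo_of_isMinOn_sub {f g : ℝ → ℝ} {K : ℝ≥0} {x₁ x₂ x : ℝ} (hf : LipschitzWith K f)
    (hg : Differentiable ℝ g) (h₁ : K < deriv g x₁) (h₂ : deriv g x₂ < -K) (hx : x ∈ Icc x₁ x₂)
    (hmin : IsMinOn (fun z => f z - g z) (Icc x₁ x₂) x) : x ∈ Ioo x₁ x₂ := by
  have hlt : x₁ < x₂ := by
    refine (hx.1.trans hx.2).lt_of_ne ?_
    rintro rfl
    linarith [K.2]
  have hgrowth : ∀ z ∈ Icc x₁ x₂, g z - g x ≤ K * |z - x| := fun z hz => by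
    have hLip : f z - f x ≤ K * |z - x| := (le_abs_self _).trans (hf.dist_le_mul z x)
    linarith [isMinOn_iff.1 hmin z hz]
  refine ⟨hx.1.lt_of_ne' ?_, hx.2.lt_of_ne ?_⟩ <;> rintro rfl
  · have hmax : IsMaxOn (fun z => g z - K * z) (Icc x x₂) x := isMaxOn_iff.2 fun z hz => by
      have := hgrowth z hz
      rw [abs_of_nonneg (sub_nonneg.2 hz.1)] at this
      linarith
    have := mul_sub_nonpos_of_isMaxOn
      ((hg x).hasDerivAt.sub ((hasDerivAt_id x).const_mul (K : ℝ))) hmax (segment_eq_Icc hlt.le).le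
    nlinarith
  · have hmax : IsMaxOn (fun z => g z + K * z) (Icc x₁ x) x := isMaxOn_iff.2 fun z hz => by
      have := hgrowth z hz
      rw [abs_of_nonpos (sub_nonpos.2 hz.2)] at this
      linarith
    have := mul_sub_nonpos_of_isMaxOn
      ((hg x).hasDerivAt.add ((hasDerivAt_id x).const_mul (K : ℝ))) hmax
      ((segment_symm ℝ x x₁).trans (segment_eq_Icc hlt.le)).le
    nlinarith

section

variable {a v P : ℝ → ℝ} {H : ℝ → ℝ → ℝ} {K : ℝ≥0} {ε mu x₁ x₂ x y : ℝ}

/- In the variables `(x, d) = (x, x - y)` the penalty is independent of `x`, so the boundary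
conditions on `P'` confine `x`, and the Lipschitz bound on `v` confines `d`. -/
theorem exists_isLocalMin_doubling (hv : LipschitzWith K v) (hP : Differentiable ℝ P) (hε : 0 < ε)
    (hx : x₁ ≤ x₂) (h₁ : K < deriv P x₁) (h₂ : deriv P x₂ < -K) :
    ∃ x ∈ Ioo x₁ x₂, ∃ y, |x - y| ≤ 2 * K * ε ∧
      IsLocalMin (fun z : ℝ × ℝ => v z.2 - P z.1 + (z.1 - z.2) ^ 2 / (2 * ε)) (x, y) := by
  set R := 2 * K * ε + 1
  have hR : 0 < R := by positivity
  set F := fun z : ℝ × ℝ => v (z.1 - z.2) - P z.1 + z.2 ^ 2 / (2 * ε)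
  have hF : Continuous F := by
    have := hv.continuous
    have := hP.continuous
    fun_prop
  obtain ⟨⟨x, d⟩, ⟨hxI, hdI⟩, hmin⟩ := (isCompact_Icc.prod isCompact_Icc).exists_isMinOn
    (s := Icc x₁ x₂ ×ˢ Icc (-R) R) ⟨(x₁, 0), left_mem_Icc.2 hx, by constructor <;> simp [hR.le]⟩
    hF.continuousOn
  rw [isMinOn_iff, Prod.forall] at hmin
  have hd : |d| ≤ 2 * K * ε := by
    have hmin0 := hmin x 0 ⟨hxI, by constructor <;> simp [hR.le]⟩
    have hLip : v x - v (x - d) ≤ K * |d| := by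
      simpa [Real.dist_eq] using (le_abs_self _).trans (hv.dist_le_mul x (x - d))
    have hsq : |d| ^ 2 / (2 * ε) ≤ K * |d| := by
      rw [sq_abs]
      simp only [F, sub_zero, ne_eq, OfNat.ofNat_ne_zero, not_false_eq_true, zero_pow,
        zero_div] at hmin0
      linarith
    rw [div_le_iff₀ (by positivity)] at hsq
    by_contra! hlt
    nlinarith [(by positivity : 0 ≤ 2 * K * ε)]
  have hxI' : x ∈ Ioo x₁ x₂ := by
    refine mem_Ioo_of_isMinOn_sub (f := fun z => v (z - d)) (K := K) ?_ hP h₁ h₂ hxI ?_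
    · simpa [Function.comp_def] using hv.comp (LipschitzWith.id.sub (LipschitzWith.const d))
    · exact isMinOn_iff.2 fun z hz => by simpa [F] using hmin z d ⟨hz, hdI⟩
  refine ⟨x, hxI', x - d, by simpa using hd, ?_⟩
  have hnhds : ∀ᶠ z : ℝ × ℝ in 𝓝 (x, x - d), z.1 ∈ Ioo x₁ x₂ ∧ |z.1 - z.2| < R := by
    refine (continuousAt_fst.eventually (isOpen_Ioo.eventually_mem hxI')).and ?_
    refine ((continuous_fst.sub continuous_snd).abs.tendsto _).eventually_lt_const ?_
    simpa using hd.trans_lt (lt_add_one _)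
  filter_upwards [hnhds] with z hz
  simpa [F] using hmin z.1 (z.1 - z.2) ⟨Ioo_subset_Icc_self hz.1, abs_le.1 hz.2.le⟩

theorem hasDerivAt_sq_sub_div (ε y z : ℝ) :
    HasDerivAt (fun z => (z - y) ^ 2 / (2 * ε)) ((z - y) / ε) z := by
  refine ((((hasDerivAt_id z).sub_const y).fun_pow 2).div_const (2 * ε)).congr_deriv ?_
  simp [mul_div_mul_left]

theorem deriv_eq_and_deriv_deriv_le_of_isLocalMin_doubling (hP : ContDiff ℝ 2 P)
    (hmin : IsLocalMin (fun z : ℝ × ℝ => v z.2 - P z.1 + (z.1 - z.2) ^ 2 / (2 * ε)) (x, y)) :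
    deriv P x = (x - y) / ε ∧ deriv (deriv P) x ≤ 1 / ε := by
  have hmin' : IsLocalMin (fun z => (z - y) ^ 2 / (2 * ε) - P z) x := by
    have := hmin.comp_continuous (g := fun z => (z, y)) (b := x) (by fun_prop)
    filter_upwards [this] with z hz
    simp only [Function.comp_apply] at hz
    linarith
  have hderiv : deriv (fun z => (z - y) ^ 2 / (2 * ε)) = fun z => (z - y) / ε :=
    funext fun z => (hasDerivAt_sq_sub_div ε y z).deriv
  have hd := deriv_eq_of_isLocalMin_sub (by fun_prop) hP hmin'
  have hdd := deriv_deriv_le_of_isLocalMin_sub (by fun_prop) hP hmin'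
  rw [hderiv] at hd hdd
  simp only [deriv_div_const, deriv_sub_const, deriv_id''] at hdd
  exact ⟨hd.symm, hdd⟩

theorem ViscSuperOn.le_of_isLocalMin_doubling (hv : ViscSuperOn a H mu univ v) (hP : ContDiff ℝ 2 P)
    (hmin : IsLocalMin (fun z : ℝ × ℝ => v z.2 - P z.1 + (z.1 - z.2) ^ 2 / (2 * ε)) (x, y))
    (t : ℝ) :
    a y * (t ^ 2 * deriv (deriv P) x - (t - 1) ^ 2 / ε) + H y (deriv P x) ≤ mu := by
  set ℓ : ℝ → ℝ := fun z => x + t * (z - y)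
  have hℓ (z : ℝ) : HasDerivAt ℓ t z :=
    ((((hasDerivAt_id z).sub_const y).const_mul t).const_add x).congr_deriv (mul_one t)
  have hℓy : ℓ y = x := by simp [ℓ]
  set φ : ℝ → ℝ := fun z => P (ℓ z) - (ℓ z - z) ^ 2 / (2 * ε)
  have hφ : ContDiff ℝ 2 φ := by fun_prop
  have hφ' (z : ℝ) :
      HasDerivAt φ (deriv P (ℓ z) * t - (ℓ z - z) * (t - 1) / ε) z := by
    refine (((hP.differentiable two_ne_zero (ℓ z)).hasDerivAt.comp z (hℓ z)).sub
      ((((hℓ z).sub (hasDerivAt_id z)).pow 2).div_const (2 * ε))).congr_deriv ?_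
    simp [mul_assoc, mul_div_mul_left]
  have hφ'' : HasDerivAt (fun z => deriv P (ℓ z) * t - (ℓ z - z) * (t - 1) / ε)
      (t ^ 2 * deriv (deriv P) x - (t - 1) ^ 2 / ε) y := by
    refine (((((hP.differentiable_deriv_two (ℓ y)).hasDerivAt.comp y (hℓ y)).mul_const t).sub
      ((((hℓ y).sub (hasDerivAt_id y)).mul_const (t - 1)).div_const ε))).congr_deriv ?_
    rw [hℓy]
    ring
  have hφmin : IsLocalMin (fun z => v z - φ z) y := by
    have hcurve :
        IsLocalMin (fun z : ℝ × ℝ => v z.2 - P z.1 + (z.1 - z.2) ^ 2 / (2 * ε)) (ℓ y, y) := by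
      rwa [hℓy]
    have hℓc : Continuous fun z => (ℓ z, z) := by fun_prop
    refine (hcurve.comp_continuous (g := fun z => (ℓ z, z)) hℓc.continuousAt).congr ?_
    exact .of_forall fun z => by simp only [φ, Function.comp_apply]; ring
  have htest := hv.le_of_contDiffAt (mem_univ y) hφ.contDiffAt (.of_forall hφ') hφ'' hφmin
  have hslope : deriv P (ℓ y) * t - (ℓ y - y) * (t - 1) / ε = deriv P x := by
    rw [hℓy, (deriv_eq_and_deriv_deriv_le_of_isLocalMin_doubling hP hmin).1]
    ring
  rwa [hslope] at htest

theorem ViscSuperOn.sq_mul_le_of_isLocalMin_doubling (hv : ViscSuperOn a H mu univ v)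
    (hP : ContDiff ℝ 2 P)
    (hmin : IsLocalMin (fun z : ℝ × ℝ => v z.2 - P z.1 + (z.1 - z.2) ^ 2 / (2 * ε)) (x, y))
    {σ : ℝ} (hσ : σ ^ 2 = a y) (s : ℝ) :
    s ^ 2 * deriv (deriv P) x + H y (deriv P x) ≤ mu + (s - σ) ^ 2 / ε := by
  rcases eq_or_ne σ 0 with rfl | hσ0
  · have htest := hv.le_of_isLocalMin_doubling hP hmin 0
    have hP'' : s ^ 2 * deriv (deriv P) x ≤ s ^ 2 * (1 / ε) := by
      gcongr
      exact (deriv_eq_and_deriv_deriv_le_of_isLocalMin_doubling hP hmin).2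
    rw [← hσ] at htest
    simp only [sub_zero]
    linarith [mul_one_div (s ^ 2) ε]
  · have htest := hv.le_of_isLocalMin_doubling hP hmin (s / σ)
    have : a y * ((s / σ) ^ 2 * deriv (deriv P) x - (s / σ - 1) ^ 2 / ε) =
        s ^ 2 * deriv (deriv P) x - (s - σ) ^ 2 / ε := by
      rw [← hσ, div_sub_one hσ0]
      field_simp
    linarith

end

/-! ### Regularised equation -/

/-- `H` is bounded and Lipschitz, jointly in both variables, on each strip `ℝ × [-R, R]`: the
regularity of the Hamiltonians in the class `𝓗(α₀, α₁, γ)` on which the construction relies. -/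
def LipschitzOnStrips (H : ℝ → ℝ → ℝ) : Prop :=
  ∀ R : ℝ≥0, ∃ M : ℝ≥0,
    LipschitzOnWith M (Function.uncurry H) (univ ×ˢ Icc (-R : ℝ) R) ∧
      ∀ x, ∀ p ∈ Icc (-R : ℝ) R, |H x p| ≤ M

theorem LipschitzOnStrips.continuous {H : ℝ → ℝ → ℝ} (hH : LipschitzOnStrips H) :
    Continuous (Function.uncurry H) := by
  refine continuous_iff_continuousAt.2 fun z => ?_
  obtain ⟨M, hM, -⟩ := hH (‖z.2‖₊ + 1)
  refine hM.continuousOn.continuousAt (prod_mem_nhds univ_mem (Icc_mem_nhds ?_ ?_)) <;>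
    push_cast [coe_nnnorm, Real.norm_eq_abs]
  · linarith [neg_abs_le z.2]
  · linarith [le_abs_self z.2]

section

variable {α₀ α₁ γ : ℝ} {H : ℝ → ℝ → ℝ}

theorem HamClass.nonneg (hH : HamClass α₀ α₁ γ H) : 0 ≤ α₁ := by
  have := (abs_nonneg _).trans (hH.2.2.2 0 1 1)
  norm_num at this
  linarith

theorem HamClass.abs_le_growth (hH : HamClass α₀ α₁ γ H) (hα₀ : 0 < α₀) (x p : ℝ) :
    |H x p| ≤ α₁ * (|p| ^ γ + 1) + 1 / α₀ := by
  have hp : 0 ≤ |p| ^ γ := by positivity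
  have hα₁ := hH.nonneg
  have hinv : 0 < 1 / α₀ := by positivity
  exact abs_le.2 ⟨by nlinarith [hH.1 x p], by linarith [hH.2.1 x p]⟩

theorem HamClass.lipschitzOnStrips (hH : HamClass α₀ α₁ γ H) (hα₀ : 0 < α₀) (hγ : 1 ≤ γ) :
    LipschitzOnStrips H := by
  intro R
  have hα₁ := hH.nonneg
  have hM : 0 ≤ α₁ * (2 * R + 1) ^ (γ - 1) + α₁ * ((R : ℝ) ^ γ + 1) + 1 / α₀ := by positivity
  refine ⟨.mk _ hM, LipschitzOnWith.of_dist_le_mul ?_, fun x p hp => ?_⟩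
  · rintro ⟨x, p⟩ ⟨-, hp⟩ ⟨y, q⟩ ⟨-, hq⟩
    rw [NNReal.coe_mk]
    set d := dist (x, p) (y, q)
    have hx : |x - y| ≤ d := le_max_left _ _
    have hpq : |p - q| ≤ d := le_max_right _ _
    have hsum : |p| + |q| + 1 ≤ 2 * R + 1 := by linarith [abs_le.2 hp, abs_le.2 hq]
    calc |H x p - H y q| ≤ |H x p - H x q| + |H x q - H y q| := abs_sub_le _ _ _
      _ ≤ α₁ * (|p| + |q| + 1) ^ (γ - 1) * |p - q| + α₁ * (|q| ^ γ + 1) * |x - y| :=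
          add_le_add (hH.2.2.1 x p q) (hH.2.2.2 x y q)
      _ ≤ α₁ * (2 * R + 1) ^ (γ - 1) * d + α₁ * ((R : ℝ) ^ γ + 1) * d := by
          gcongr
          exact abs_le.2 hq
      _ ≤ (α₁ * (2 * R + 1) ^ (γ - 1) + α₁ * ((R : ℝ) ^ γ + 1) + 1 / α₀) * d := by
          nlinarith [mul_nonneg (one_div_pos.2 hα₀).le (dist_nonneg : 0 ≤ d)]
  · rw [NNReal.coe_mk]
    have hgrowth : α₁ * (|p| ^ γ + 1) ≤ α₁ * ((R : ℝ) ^ γ + 1) := by gcongr; exact abs_le.2 hp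
    have : 0 ≤ α₁ * (2 * R + 1) ^ (γ - 1) := by positivity
    linarith [hH.abs_le_growth hα₀ x p]

end

section

variable {E : Type*} [NormedAddCommGroup E] [NormedSpace ℝ E] [CompleteSpace E]
  {g : ℝ → E → E} {M N : ℝ≥0} {t₀ t₁ : ℝ}

theorem exists_contDiff_one_deriv_eq (hg : Continuous (Function.uncurry g))
    (hbdd : ∀ x p, ‖g x p‖ ≤ N) (hlip : ∀ x, LipschitzWith M (g x)) (h : t₀ ≤ t₁) (p₀ : E) :
    ∃ q : ℝ → E, ContDiff ℝ 1 q ∧ q t₀ = p₀ ∧ ∀ x ∈ Icc t₀ t₁, deriv q x = g x (q x) := by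
  have hPL : IsPicardLindelof g (tmin := t₀) (tmax := t₁) ⟨t₀, left_mem_Icc.2 h⟩ p₀
      (N * (t₁ - t₀).toNNReal) 0 N M :=
    { lipschitzOnWith := fun x _ => (hlip x).lipschitzOnWith
      continuousOn := fun p _ => (hg.comp (.prodMk_left p)).continuousOn
      norm_le := fun x _ p _ => hbdd x p
      mul_max_le := by simp [h] }
  obtain ⟨α, hα₀, hα⟩ := hPL.exists_eq_forall_mem_Icc_hasDerivWithinAt₀
  have hαc : ContinuousOn α (Icc t₀ t₁) := fun t ht => (hα t ht).continuousWithinAt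
  set β : ℝ → E := IccExtend h ((Icc t₀ t₁).domRestrict α)
  have hβα : ∀ t ∈ Icc t₀ t₁, β t = α t := fun t ht => IccExtend_of_mem _ _ ht
  have hβ : Continuous β := (continuousOn_iff_continuous_domRestrict.1 hαc).Icc_extend'
  have hgβ : Continuous fun x => g x (β x) := hg.comp (continuous_id.prodMk hβ)
  set q : ℝ → E := fun x => p₀ + ∫ s in t₀..x, g s (β s)
  have hq (x : ℝ) : HasDerivAt q (g x (β x)) x :=
    (hgβ.integral_hasStrictDerivAt t₀ x).hasDerivAt.const_add p₀
  have hq' : deriv q = fun x => g x (β x) := funext fun x => (hq x).deriv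
  have hqα : ∀ t ∈ Icc t₀ t₁, q t = α t := by
    refine eq_of_has_deriv_right_eq (f' := fun x => g x (β x))
      (fun x _ => (hq x).hasDerivWithinAt) (fun x hx => ?_)
      (fun x _ => (hq x).continuousAt.continuousWithinAt) hαc (by simp [q, hα₀])
    rw [hβα x (Ico_subset_Icc_self hx)]
    exact (hα x (Ico_subset_Icc_self hx)).mono_of_mem_nhdsWithin (Icc_mem_nhdsGE_of_mem hx)
  refine ⟨q, contDiff_one_iff_deriv.2 ⟨fun x => (hq x).differentiableAt, hq' ▸ hgβ⟩, by simp [q],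
    fun x hx => ?_⟩
  rw [(hq x).deriv, hqα x hx, hβα x hx]

theorem exists_contDiff_two_deriv_deriv_eq (hg : Continuous (Function.uncurry g))
    (hbdd : ∀ x p, ‖g x p‖ ≤ N) (hlip : ∀ x, LipschitzWith M (g x)) (h : t₀ ≤ t₁) (p₀ : E) :
    ∃ P : ℝ → E, ContDiff ℝ 2 P ∧ P 0 = 0 ∧ deriv P t₀ = p₀ ∧
      ∀ x ∈ Icc t₀ t₁, deriv (deriv P) x = g x (deriv P x) := by
  obtain ⟨q, hq, hq₀, hq'⟩ := exists_contDiff_one_deriv_eq hg hbdd hlip h p₀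
  have hP (x : ℝ) : HasDerivAt (fun x => ∫ s in (0 : ℝ)..x, q s) (q x) x :=
    (hq.continuous.integral_hasStrictDerivAt 0 x).hasDerivAt
  have hP' : deriv (fun x => ∫ s in (0 : ℝ)..x, q s) = q := funext fun x => (hP x).deriv
  refine ⟨fun x => ∫ s in (0 : ℝ)..x, q s, ?_, by simp, by rwa [hP'], by rwa [hP']⟩
  rw [← one_add_one_eq_two, contDiff_succ_iff_deriv, hP']
  exact ⟨fun x => (hP x).differentiableAt, by simp, hq⟩

end

section

variable {H : ℝ → ℝ → ℝ} {L : ℝ} {R : ℝ≥0} {t₀ t₁ : ℝ}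

theorem exists_contDiff_two_eq_of_abs_deriv_le (hH : LipschitzOnStrips H) {c : ℝ → ℝ}
    (hc : Continuous c) {δ : ℝ} (hδ : 0 < δ) (hcδ : ∀ x, δ ≤ c x) (L : ℝ) (R : ℝ≥0)
    (h : t₀ ≤ t₁) (p₀ : ℝ) :
    ∃ P : ℝ → ℝ, ContDiff ℝ 2 P ∧ P 0 = 0 ∧ deriv P t₀ = p₀ ∧ ∀ x ∈ Icc t₀ t₁, |deriv P x| ≤ R →
      c x * deriv (deriv P) x + H x (deriv P x) = L := by
  have hc0 (x : ℝ) : 0 < c x := hδ.trans_le (hcδ x)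
  obtain ⟨M, hM, hbdd⟩ := hH R
  set clamp : ℝ → ℝ := fun p => projIcc (-R : ℝ) R (neg_le_self R.coe_nonneg) p
  have hclamp (p : ℝ) : clamp p ∈ Icc (-R : ℝ) R := Subtype.property _
  have hclamp_lip : LipschitzWith 1 clamp := LipschitzWith.projIcc _
  set g : ℝ → ℝ → ℝ := fun x p => (L - H x (clamp p)) / c x
  have hg : Continuous (Function.uncurry g) := by
    have hHclamp : Continuous fun z : ℝ × ℝ => H z.1 (clamp z.2) :=
      hH.continuous.comp (continuous_fst.prodMk (hclamp_lip.continuous.comp continuous_snd))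
    exact (continuous_const.sub hHclamp).div (hc.comp continuous_fst) fun z => (hc0 z.1).ne'
  have hg_bdd (x p : ℝ) : ‖g x p‖ ≤ ((‖L‖₊ + M) / δ.toNNReal : ℝ≥0) := by
    push_cast
    rw [norm_div, Real.norm_of_nonneg (hc0 x).le, Real.coe_toNNReal _ hδ.le]
    gcongr
    exacts [(norm_sub_le _ _).trans (add_le_add le_rfl (hbdd x _ (hclamp p))), hcδ x]
  have hg_lip (x : ℝ) : LipschitzWith (M / δ.toNNReal) (g x) := by
    refine LipschitzWith.of_dist_le_mul fun p q => ?_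
    have hHclamp : |H x (clamp p) - H x (clamp q)| ≤ M * |p - q| := by
      refine (hM.dist_le_mul (x, clamp p) ⟨mem_univ _, hclamp p⟩
        (x, clamp q) ⟨mem_univ _, hclamp q⟩).trans ?_
      simpa [Prod.dist_eq, Real.dist_eq] using
        mul_le_mul_of_nonneg_left (hclamp_lip.dist_le_mul p q) M.coe_nonneg
    rw [Real.dist_eq, Real.dist_eq, ← sub_div, sub_sub_sub_cancel_left, abs_div,
      abs_of_pos (hc0 x), abs_sub_comm, NNReal.coe_div, Real.coe_toNNReal _ hδ.le,
      div_mul_eq_mul_div]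
    gcongr
    exact hcδ x
  obtain ⟨P, hP, hP0, hPt₀, hPeq⟩ := exists_contDiff_two_deriv_deriv_eq hg hg_bdd hg_lip h p₀
  refine ⟨P, hP, hP0, hPt₀, fun x hx hxR => ?_⟩
  have hclampP : clamp (deriv P x) = deriv P x := by simp [clamp, projIcc_of_mem _ (abs_le.1 hxR)]
  rw [hPeq x hx, mul_div_cancel₀ _ (hc0 x).ne', hclampP, sub_add_cancel]

theorem deriv_le_of_lt_hamiltonian {c P : ℝ → ℝ} (hP : ContDiff ℝ 2 P) (hc : ∀ x, 0 < c x)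
    (hH : ∀ x, L < H x R) (hPt₀ : deriv P t₀ ≤ R)
    (heq : ∀ x ∈ Icc t₀ t₁, |deriv P x| ≤ R → c x * deriv (deriv P) x + H x (deriv P x) = L) :
    ∀ x ∈ Icc t₀ t₁, deriv P x ≤ R := by
  intro x hx
  refine image_le_of_deriv_right_lt_deriv_boundary (B' := fun _ => 0)
    (hP.continuous_deriv one_le_two).continuousOn
    (fun x _ => (hP.differentiable_deriv_two x).hasDerivAt.hasDerivWithinAt) hPt₀
    (fun x => hasDerivAt_const x (R : ℝ)) (fun x hx hxR => ?_) hx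
  have := heq x (Ico_subset_Icc_self hx) (by rw [hxR, NNReal.abs_eq])
  rw [hxR] at this
  nlinarith [hH x, hc x]

end

section

variable {a σ v P : ℝ → ℝ} {H : ℝ → ℝ → ℝ} {K κ M : ℝ≥0} {ε mu L x₁ x₂ : ℝ}

/- At the doubled minimum the supersolution test at level `mu` and the equation at level `L` for `P`
agree up to the stated multiple of `ε`, so `P'` cannot cross from above `K` to below `-K`. -/
theorem ViscSuperOn.neg_le_deriv_of_lipschitzWith (hv : ViscSuperOn a H mu univ v)
    (hvK : LipschitzWith K v) (hσ : LipschitzWith κ σ) (hσa : ∀ x, σ x ^ 2 = a x)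
    (hH : LipschitzOnWith M (Function.uncurry H) (univ ×ˢ Icc (-(2 * K) : ℝ) (2 * K)))
    (hP : ContDiff ℝ 2 P) (hε : 0 < ε) (hx : x₁ ≤ x₂) (hPx₁ : K < deriv P x₁)
    (heq : ∀ x ∈ Icc x₁ x₂, |deriv P x| ≤ 2 * K →
      (σ x + ε) ^ 2 * deriv (deriv P) x + H x (deriv P x) = L)
    (hL : mu + ((κ * (2 * K) + 1) ^ 2 + M * (2 * K)) * ε < L) : -K ≤ deriv P x₂ := by
  by_contra! hPx₂
  obtain ⟨x, hxI, y, hxy, hmin⟩ :=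
    exists_isLocalMin_doubling hvK (hP.differentiable two_ne_zero) hε hx hPx₁ hPx₂
  obtain ⟨hP', -⟩ := deriv_eq_and_deriv_deriv_le_of_isLocalMin_doubling hP hmin
  have hPK : |deriv P x| ≤ 2 * K := by rwa [hP', abs_div, abs_of_pos hε, div_le_iff₀ hε]
  have hsuper := hv.sq_mul_le_of_isLocalMin_doubling hP hmin (hσa y) (σ x + ε)
  have hσxy : |σ x - σ y| ≤ κ * (2 * K * ε) :=
    (hσ.dist_le_mul x y).trans (mul_le_mul_of_nonneg_left hxy κ.coe_nonneg)
  have hsq : (σ x + ε - σ y) ^ 2 / ε ≤ (κ * (2 * K) + 1) ^ 2 * ε := by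
    rw [div_le_iff₀ hε, mul_assoc, ← sq, ← mul_pow]
    refine sq_le_sq' ?_ ?_ <;> linarith [abs_le.1 hσxy]
  have hHxy : |H x (deriv P x) - H y (deriv P x)| ≤ M * (2 * K * ε) := by
    refine (hH.dist_le_mul (x, deriv P x) ⟨mem_univ _, abs_le.1 hPK⟩
      (y, deriv P x) ⟨mem_univ _, abs_le.1 hPK⟩).trans ?_
    rw [dist_prod_same_right]
    exact mul_le_mul_of_nonneg_left hxy M.coe_nonneg
  linarith [heq x (Ioo_subset_Icc_self hxI) hPK, le_abs_self (H x (deriv P x) - H y (deriv P x))]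

end

/-- `P` is a classical solution of `c u'' + H(x, u') = L` on the interval `[-T, T]` with slope
bounded by `R`, normalised at the origin: the approximants whose limit is the viscosity solution. -/
structure IsBoundedSlopeSol (c : ℝ → ℝ) (H : ℝ → ℝ → ℝ) (L R T : ℝ) (P : ℝ → ℝ) : Prop where
  contDiff : ContDiff ℝ 2 P
  map_zero : P 0 = 0
  abs_deriv_le : ∀ x ∈ Icc (-T) T, |deriv P x| ≤ R
  eq : ∀ x ∈ Icc (-T) T, c x * deriv (deriv P) x + H x (deriv P x) = L

theorem ViscSuperOn.exists_isBoundedSlopeSol {a σ v : ℝ → ℝ} {H : ℝ → ℝ → ℝ} {K κ : ℝ≥0}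
    {mu L T e : ℝ} (hv : ViscSuperOn a H mu univ v) (hvK : LipschitzWith K v)
    (hσ : LipschitzWith κ σ) (hσ0 : ∀ x, 0 ≤ σ x) (hσa : ∀ x, σ x ^ 2 = a x)
    (hH : LipschitzOnStrips H) (hmu : mu < L) (hL : ∀ x, L < H x (2 * K + 1)) (hT : 0 ≤ T)
    (he : 0 < e) :
    ∃ ε ∈ Ioo 0 e, ∃ P, IsBoundedSlopeSol (fun x => (σ x + ε) ^ 2) H L (2 * K + 1) T P := by
  obtain ⟨M, hM, -⟩ := hH (2 * K)
  have hsmall : ∀ᶠ ε in 𝓝[>] (0 : ℝ), mu + ((κ * (2 * K) + 1) ^ 2 + M * (2 * K)) * ε < L := by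
    refine Tendsto.eventually_lt_const hmu (tendsto_nhdsWithin_of_tendsto_nhds ?_)
    exact Continuous.tendsto' (by fun_prop) _ _ (by simp)
  obtain ⟨ε, hεL, hε⟩ := (hsmall.and (Ioo_mem_nhdsGT he)).exists
  have hcpos (x : ℝ) : 0 < (σ x + ε) ^ 2 := pow_pos (add_pos_of_nonneg_of_pos (hσ0 x) hε.1) 2
  obtain ⟨P, hP, hP0, hPT, heq⟩ := exists_contDiff_two_eq_of_abs_deriv_le hH
    (c := fun x => (σ x + ε) ^ 2) (by have := hσ.continuous; fun_prop) (pow_pos hε.1 2)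
    (fun x => pow_le_pow_left₀ hε.1.le (le_add_of_nonneg_left (hσ0 x)) 2) L (2 * K + 1)
    (neg_le_self hT) (2 * K + 1)
  push_cast at heq
  have hupper := deriv_le_of_lt_hamiltonian (R := 2 * K + 1) hP hcpos (by exact_mod_cast hL)
    (by simpa using hPT.le) (by exact_mod_cast heq)
  push_cast at hupper
  have hlower : ∀ x ∈ Icc (-T) T, -K ≤ deriv P x := fun x hx =>
    hv.neg_le_deriv_of_lipschitzWith hvK hσ hσa (by exact_mod_cast hM) hP hε.1 hx.1
      (by linarith [K.coe_nonneg])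
      (fun z hz hzK => heq z ⟨hz.1, hz.2.trans hx.2⟩ (hzK.trans (by linarith))) hεL
  have hslope : ∀ x ∈ Icc (-T) T, |deriv P x| ≤ 2 * K + 1 := fun x hx =>
    abs_le.2 ⟨by linarith [hlower x hx, K.coe_nonneg], hupper x hx⟩
  exact ⟨ε, hε, P, hP, hP0, hslope, fun x hx => heq x hx (hslope x hx)⟩

/-! ### Passage to the limit -/

section

variable {ι : Type*} {l : Filter ι}

theorem frequently_isLocalMin_of_tendsto [l.NeBot] {f : ι → ℝ → ℝ} {F : ℝ → ℝ} {x₀ : ℝ}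
    (hf : ∀ i, Continuous (f i)) (hF : ∀ x, Tendsto (fun i => f i x) l (𝓝 (F x)))
    (hmin : ∀ᶠ x in 𝓝[≠] x₀, F x₀ < F x) :
    ∃ᶠ q in l ×ˢ 𝓝 x₀, IsLocalMin (f q.1) q.2 := by
  intro hnot
  obtain ⟨A, hA, B, hB, hAB⟩ := eventually_prod_iff.1 hnot
  obtain ⟨r, hr, hball⟩ := Metric.nhds_basis_closedBall.eventually_iff.1
    ((eventually_nhdsWithin_iff.1 hmin).and hB)
  simp only [Real.closedBall_eq_Icc] at hball
  have hx₀ : x₀ ∈ Icc (x₀ - r) (x₀ + r) := ⟨by linarith, by linarith⟩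
  have hendpoint : ∀ x ∈ Icc (x₀ - r) (x₀ + r), x ≠ x₀ → ∀ᶠ i in l, f i x₀ < f i x :=
    fun x hx hne => (hF x₀).eventually_lt (hF x) ((hball hx).1 hne)
  obtain ⟨i, hAi, hleft, hright⟩ := (hA.and
    ((hendpoint (x₀ - r) ⟨le_rfl, by linarith⟩ (by linarith)).and
      (hendpoint (x₀ + r) ⟨by linarith, le_rfl⟩ (by linarith)))).exists
  have hboundary : ∀ z ∈ Icc (x₀ - r) (x₀ + r) \ Ioo (x₀ - r) (x₀ + r), f i x₀ < f i z := by
    rw [Icc_sdiff_Ioo_same (by linarith)]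
    rintro z (rfl | rfl)
    exacts [hleft, hright]
  obtain ⟨x, hx, hxmin⟩ := isCompact_Icc.exists_isLocalMin_mem_open Ioo_subset_Icc_self
    (hf i).continuousOn hx₀ hboundary isOpen_Ioo
  exact hAB hAi (hball (Ioo_subset_Icc_self hx)).2 hxmin

theorem exists_contDiff_strict_isLocalMin_sub {u φ : ℝ → ℝ} {x₀ : ℝ} (hφ : ContDiff ℝ 2 φ)
    (hmin : IsLocalMin (fun x => u x - φ x) x₀) :
    ∃ ψ : ℝ → ℝ, ContDiff ℝ 2 ψ ∧ deriv ψ x₀ = deriv φ x₀ ∧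
      deriv (deriv ψ) x₀ = deriv (deriv φ) x₀ ∧ ∀ᶠ x in 𝓝[≠] x₀, u x₀ - ψ x₀ < u x - ψ x := by
  let ψ : ℝ → ℝ := fun x => φ x - (x - x₀) ^ 4
  have hψ' : deriv ψ = fun x => deriv φ x - 4 * (x - x₀) ^ 3 := funext fun x =>
    (((hφ.differentiable two_ne_zero x).hasDerivAt.fun_sub
      (((hasDerivAt_id x).sub_const x₀).fun_pow 4)).congr_deriv (by simp)).deriv
  have hψ'' : deriv (deriv ψ) x₀ = deriv (deriv φ) x₀ := by
    rw [hψ']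
    exact (((hφ.differentiable_deriv_two x₀).hasDerivAt.fun_sub
      ((((hasDerivAt_id x₀).sub_const x₀).fun_pow 3).const_mul 4)).congr_deriv (by simp)).deriv
  have hstrict : ∀ᶠ x in 𝓝[≠] x₀, u x₀ - ψ x₀ < u x - ψ x := by
    filter_upwards [hmin.filter_mono nhdsWithin_le_nhds, self_mem_nhdsWithin] with x hx hne
    have : 0 < (x - x₀) ^ 4 := (by decide : Even 4).pow_pos (sub_ne_zero.2 hne)
    simp only [ψ, sub_self, ne_eq, OfNat.ofNat_ne_zero, not_false_eq_true, zero_pow, sub_zero]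
    linarith
  exact ⟨ψ, hφ.sub (by fun_prop), by simp [hψ'], hψ'', hstrict⟩

theorem viscSuperOn_of_tendsto [l.NeBot] {a u : ℝ → ℝ} {H : ℝ → ℝ → ℝ} {lam : ℝ}
    {c P : ι → ℝ → ℝ} {L : ι → ℝ} {U : ι → Set ℝ} (hP : ∀ i, ViscSuperOn (c i) H (L i) (U i) (P i))
    (hPc : ∀ i, Continuous (P i)) (hU : ∀ x, ∀ᶠ q in l ×ˢ 𝓝 x, q.2 ∈ U q.1)
    (hc : ∀ x, Tendsto (fun q : ι × ℝ => c q.1 q.2) (l ×ˢ 𝓝 x) (𝓝 (a x)))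
    (hH : Continuous (Function.uncurry H)) (hL : Tendsto L l (𝓝 lam))
    (hu : ∀ x, Tendsto (fun i => P i x) l (𝓝 (u x))) : ViscSuperOn a H lam univ u := by
  rintro φ hφ x₀ - hmin
  obtain ⟨ψ, hψ, hψ', hψ'', hstrict⟩ := exists_contDiff_strict_isLocalMin_sub hφ hmin
  have hfreq : ∃ᶠ q in l ×ˢ 𝓝 x₀,
      c q.1 q.2 * deriv (deriv ψ) q.2 + H q.2 (deriv ψ q.2) ≤ L q.1 :=
    ((frequently_isLocalMin_of_tendsto (f := fun i x => P i x - ψ x)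
      (fun i => (hPc i).sub hψ.continuous) (fun x => (hu x).sub_const _) hstrict).and_eventually
      (hU x₀)).mono fun q hq => hP q.1 ψ hψ q.2 hq.2 hq.1
  have hHψ : Continuous fun x => H x (deriv ψ x) :=
    hH.comp (continuous_id.prodMk (hψ.continuous_deriv one_le_two))
  have hψ''c : Continuous (deriv (deriv ψ)) := (hψ.iterate_deriv' 0 2).continuous
  have hlim := ((hc x₀).mul ((hψ''c.tendsto x₀).comp tendsto_snd)).add
    ((hHψ.tendsto x₀).comp tendsto_snd)
  have hle := le_of_tendsto_of_tendsto_of_frequently hlim (hL.comp tendsto_fst) hfreq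
  rwa [hψ'', hψ'] at hle

theorem tendsto_prod_nhds_of_abs_deriv_le {f : ι → ℝ → ℝ} {x y M : ℝ}
    (hf : ∀ i, Differentiable ℝ (f i)) (hM : ∀ᶠ q in l ×ˢ 𝓝 x, |deriv (f q.1) q.2| ≤ M)
    (hy : Tendsto (fun i => f i x) l (𝓝 y)) :
    Tendsto (fun q : ι × ℝ => f q.1 q.2) (l ×ˢ 𝓝 x) (𝓝 y) := by
  obtain ⟨A, hA, B, hB, hAB⟩ := eventually_prod_iff.1 hM
  obtain ⟨r, hr, hball⟩ := Metric.nhds_basis_ball.eventually_iff.1 hB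
  have hzero : Tendsto (fun q : ι × ℝ => f q.1 q.2 - f q.1 x) (l ×ˢ 𝓝 x) (𝓝 0) := by
    have hbound : Tendsto (fun q : ι × ℝ => M * ‖q.2 - x‖) (l ×ˢ 𝓝 x) (𝓝 0) := by
      have hcont : Continuous fun z : ℝ => M * ‖z - x‖ := by fun_prop
      exact (hcont.tendsto' x 0 (by simp)).comp tendsto_snd
    refine squeeze_zero_norm' ?_ hbound
    filter_upwards [prod_mem_prod hA (Metric.ball_mem_nhds x hr)] with q hq
    exact (convex_ball x r).norm_image_sub_le_of_norm_deriv_le (fun z _ => hf q.1 z)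
      (fun z hz => hAB hq.1 (hball hz)) (Metric.mem_ball_self hr) hq.2
  simpa using hzero.add (hy.comp tendsto_fst)

theorem hasDerivAt_of_tendsto_deriv [l.NeBot] {f : ι → ℝ → ℝ} {F : ℝ → ℝ} {x F' : ℝ}
    (hf : ∀ i, Differentiable ℝ (f i)) (hF : ∀ y, Tendsto (fun i => f i y) l (𝓝 (F y)))
    (hf' : Tendsto (fun q : ι × ℝ => deriv (f q.1) q.2) (l ×ˢ 𝓝 x) (𝓝 F')) :
    HasDerivAt F F' x :=
  hasDerivAt_of_tendstoUniformlyOnFilter (f' := fun i => deriv (f i)) (g' := fun _ => F')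
    (tendsto_prod_filter_iff.1 hf') (.of_forall fun q => (hf q.1 q.2).hasDerivAt) (.of_forall hF)

end

section

variable {c P : ℝ → ℝ} {H : ℝ → ℝ → ℝ} {L R T : ℝ}

theorem IsBoundedSlopeSol.neg (h : IsBoundedSlopeSol c H L R T P) :
    IsBoundedSlopeSol c (fun x p => -H x (-p)) (-L) R T (fun x => -P x) := by
  have hP' : deriv (fun x => -P x) = fun x => -deriv P x := funext fun _ => deriv.fun_neg
  have hP'' (x : ℝ) : deriv (fun x => -deriv P x) x = -deriv (deriv P) x := deriv.fun_neg
  refine ⟨h.contDiff.neg, by simp [h.map_zero], fun x hx => ?_, fun x hx => ?_⟩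
  · simpa [hP'] using h.abs_deriv_le x hx
  · rw [hP', hP'', neg_neg, ← h.eq x hx]
    ring

theorem IsBoundedSlopeSol.viscSuperOn (h : IsBoundedSlopeSol c H L R T P) (hc : ∀ x, 0 ≤ c x) :
    ViscSuperOn c H L (Icc (-T) T) P := by
  intro φ hφ x hx hmin
  rw [← deriv_eq_of_isLocalMin_sub h.contDiff hφ hmin, ← h.eq x hx]
  gcongr
  exacts [hc x, deriv_deriv_le_of_isLocalMin_sub h.contDiff hφ hmin]

theorem IsBoundedSlopeSol.abs_sub_le (h : IsBoundedSlopeSol c H L R T P) {x y : ℝ}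
    (hx : x ∈ Icc (-T) T) (hy : y ∈ Icc (-T) T) : |P x - P y| ≤ R * |x - y| :=
  (convex_Icc (-T) T).norm_image_sub_le_of_norm_deriv_le
    (fun z _ => h.contDiff.differentiable two_ne_zero z) h.abs_deriv_le hy hx

end

theorem exists_tendsto_ultrafilter_of_abs_le {ι : Type*} {l : Ultrafilter ι} {f : ι → ℝ}
    {b : ℝ} (h : ∀ᶠ i in l, |f i| ≤ b) : ∃ y, Tendsto f l (𝓝 y) := by
  obtain ⟨y, -, hy⟩ := (isCompact_Icc (a := -b) (b := b)).ultrafilter_le_nhds' (l.map f)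
    (h.mono fun i hi => abs_le.1 hi)
  exact ⟨y, hy⟩

section

variable {ι : Type*} {l : Filter ι} {T : ι → ℝ}

theorem eventually_mem_Icc_neg (hT : Tendsto T l atTop) (x : ℝ) :
    ∀ᶠ q in l ×ˢ 𝓝 x, q.2 ∈ Icc (-T q.1) (T q.1) := by
  filter_upwards [(hT.eventually_ge_atTop (|x| + 1)).prod_mk
    ((continuous_abs.tendsto x).eventually_le_const (lt_add_one |x|))] with q hq
  exact abs_le.1 (hq.2.trans hq.1)

variable {a u p : ℝ → ℝ} {H : ℝ → ℝ → ℝ} {c P : ι → ℝ → ℝ} {L : ι → ℝ} {lam R : ℝ} {x : ℝ}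

theorem viscSolOn_of_tendsto_isBoundedSlopeSol [l.NeBot] (hT : Tendsto T l atTop)
    (hP : ∀ i, IsBoundedSlopeSol (c i) H (L i) R (T i) (P i)) (hc0 : ∀ i x, 0 ≤ c i x)
    (hc : ∀ x, Tendsto (fun q : ι × ℝ => c q.1 q.2) (l ×ˢ 𝓝 x) (𝓝 (a x)))
    (hH : Continuous (Function.uncurry H)) (hL : Tendsto L l (𝓝 lam))
    (hu : ∀ x, Tendsto (fun i => P i x) l (𝓝 (u x))) : ViscSolOn a H lam univ u := by
  have hHneg : Continuous (Function.uncurry fun x p => -H x (-p)) :=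
    (hH.comp (continuous_fst.prodMk continuous_snd.neg)).neg
  exact ⟨ViscSuperOn.viscSubOn_neg <| viscSuperOn_of_tendsto
      (fun i => (hP i).neg.viscSuperOn (hc0 i)) (fun i => (hP i).contDiff.continuous.neg)
      (eventually_mem_Icc_neg hT) hc hHneg hL.neg (fun x => (hu x).neg),
    viscSuperOn_of_tendsto (fun i => (hP i).viscSuperOn (hc0 i))
      (fun i => (hP i).contDiff.continuous) (eventually_mem_Icc_neg hT) hc hH hL hu⟩

theorem eventually_deriv_deriv_eq (hT : Tendsto T l atTop)
    (hP : ∀ i, IsBoundedSlopeSol (c i) H (L i) R (T i) (P i))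
    (hc : Tendsto (fun q : ι × ℝ => c q.1 q.2) (l ×ˢ 𝓝 x) (𝓝 (a x))) (hx : 0 < a x) :
    ∀ᶠ q in l ×ˢ 𝓝 x, deriv (deriv (P q.1)) q.2 =
      (L q.1 - H q.2 (deriv (P q.1) q.2)) / c q.1 q.2 := by
  filter_upwards [eventually_mem_Icc_neg hT x, hc.eventually_const_lt hx] with q hqT hqc
  rw [eq_div_iff hqc.ne', ← (hP q.1).eq q.2 hqT]
  ring

theorem tendsto_deriv_of_isBoundedSlopeSol (hT : Tendsto T l atTop)
    (hP : ∀ i, IsBoundedSlopeSol (c i) H (L i) R (T i) (P i))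
    (hc : Tendsto (fun q : ι × ℝ => c q.1 q.2) (l ×ˢ 𝓝 x) (𝓝 (a x))) (hx : 0 < a x)
    (hH : LipschitzOnStrips H) (hL : Tendsto L l (𝓝 lam))
    (hp : Tendsto (fun i => deriv (P i) x) l (𝓝 (p x))) :
    Tendsto (fun q : ι × ℝ => deriv (P q.1) q.2) (l ×ˢ 𝓝 x) (𝓝 (p x)) := by
  obtain ⟨M, -, hM⟩ := hH R.toNNReal
  refine tendsto_prod_nhds_of_abs_deriv_le (M := (|lam| + 1 + M) / (a x / 2))
    (fun i => (hP i).contDiff.differentiable_deriv_two) ?_ hp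
  filter_upwards [eventually_deriv_deriv_eq hT hP hc hx, eventually_mem_Icc_neg hT x,
    hc.eventually_const_le (half_lt_self hx),
    (hL.abs.eventually_le_const (lt_add_one _)).prod_inl _] with q hq hqT hqc hqL
  have hslope := abs_le.1 (((hP q.1).abs_deriv_le q.2 hqT).trans R.le_coe_toNNReal)
  rw [hq, abs_div, abs_of_pos ((half_pos hx).trans_le hqc)]
  gcongr
  exact (abs_sub _ _).trans (add_le_add hqL (hM q.2 _ hslope))

theorem contDiffOn_of_tendsto_isBoundedSlopeSol [l.NeBot] (hT : Tendsto T l atTop)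
    (hP : ∀ i, IsBoundedSlopeSol (c i) H (L i) R (T i) (P i))
    (hc : ∀ x, Tendsto (fun q : ι × ℝ => c q.1 q.2) (l ×ˢ 𝓝 x) (𝓝 (a x))) (ha : Continuous a)
    (hH : LipschitzOnStrips H) (hL : Tendsto L l (𝓝 lam))
    (hu : ∀ x, Tendsto (fun i => P i x) l (𝓝 (u x)))
    (hp : ∀ x, Tendsto (fun i => deriv (P i) x) l (𝓝 (p x))) :
    ContDiffOn ℝ 2 u {x | 0 < a x} := by
  have hjoint : ∀ x, 0 < a x →
      Tendsto (fun q : ι × ℝ => deriv (P q.1) q.2) (l ×ˢ 𝓝 x) (𝓝 (p x)) := fun x hx =>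
    tendsto_deriv_of_isBoundedSlopeSol hT hP (hc x) hx hH hL (hp x)
  have hu' : ∀ x ∈ {x | 0 < a x}, HasDerivAt u (p x) x := fun x hx =>
    hasDerivAt_of_tendsto_deriv (fun i => (hP i).contDiff.differentiable two_ne_zero) hu
      (hjoint x hx)
  have hp' : ∀ x ∈ {x | 0 < a x}, HasDerivAt p ((lam - H x (p x)) / a x) x := fun x hx => by
    refine hasDerivAt_of_tendsto_deriv (fun i => (hP i).contDiff.differentiable_deriv_two) hp ?_
    refine Tendsto.congr' ((eventually_deriv_deriv_eq hT hP (hc x) hx).mono fun q hq => hq.symm) ?_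
    have hHlim := (hH.continuous.tendsto (x, p x)).comp (tendsto_snd.prodMk_nhds (hjoint x hx))
    exact ((hL.comp tendsto_fst).sub hHlim).div (hc x) (ne_of_gt hx)
  have hpc : ContinuousOn p {x | 0 < a x} := fun x hx => (hp' x hx).continuousAt.continuousWithinAt
  refine contDiffOn_two_of_hasDerivAt (isOpen_lt continuous_const ha) hu' hp' ?_
  exact (continuousOn_const.sub (hH.continuous.comp_continuousOn (continuousOn_id.prodMk hpc))).div
    ha.continuousOn fun x hx => ne_of_gt hx

end

theorem exists_viscSolOn_of_isBoundedSlopeSol {ι : Type*} {l : Filter ι} [l.NeBot] {a : ℝ → ℝ}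
    {H : ℝ → ℝ → ℝ} {c P : ι → ℝ → ℝ} {L T : ι → ℝ} {lam R : ℝ} (hT : Tendsto T l atTop)
    (hP : ∀ i, IsBoundedSlopeSol (c i) H (L i) R (T i) (P i)) (hc0 : ∀ i x, 0 ≤ c i x)
    (hc : ∀ x, Tendsto (fun q : ι × ℝ => c q.1 q.2) (l ×ˢ 𝓝 x) (𝓝 (a x))) (ha : Continuous a)
    (hH : LipschitzOnStrips H) (hL : Tendsto L l (𝓝 lam)) :
    ∃ u, Continuous u ∧ ViscSolOn a H lam univ u ∧ ContDiffOn ℝ 2 u {x | 0 < a x} := by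
  set m : Ultrafilter ι := Ultrafilter.of l
  have hml : (m : Filter ι) ≤ l := Ultrafilter.of_le l
  have hTm : Tendsto T m atTop := hT.mono_left hml
  have hcm (x : ℝ) := (hc x).mono_left (prod_mono_left (𝓝 x) hml)
  have hmem (x : ℝ) : ∀ᶠ i in m, x ∈ Icc (-T i) (T i) :=
    (hTm.eventually_ge_atTop |x|).mono fun i hi => abs_le.1 hi
  have hPlim (x : ℝ) : ∃ y, Tendsto (fun i => P i x) m (𝓝 y) :=
    exists_tendsto_ultrafilter_of_abs_le (b := R * |x|) <| by
      filter_upwards [hmem x, hmem 0] with i hix hi0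
      simpa [(hP i).map_zero] using (hP i).abs_sub_le hix hi0
  have hP'lim (x : ℝ) : ∃ y, Tendsto (fun i => deriv (P i) x) m (𝓝 y) :=
    exists_tendsto_ultrafilter_of_abs_le ((hmem x).mono fun i => (hP i).abs_deriv_le x)
  choose u hu using hPlim
  choose p hp using hP'lim
  have hu_lip (x y : ℝ) : |u x - u y| ≤ R * |x - y| :=
    le_of_tendsto ((hu x).sub (hu y)).abs <| by
      filter_upwards [hmem x, hmem y] with i hix hiy using (hP i).abs_sub_le hix hiy
  exact ⟨u, (LipschitzWith.of_dist_le' hu_lip).continuous,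
    viscSolOn_of_tendsto_isBoundedSlopeSol hTm hP hc0 hcm hH.continuous (hL.mono_left hml) hu,
    contDiffOn_of_tendsto_isBoundedSlopeSol hTm hP hcm ha hH (hL.mono_left hml) hu hp⟩

/-! ### The critical value -/

section

variable {a : ℝ → ℝ} {H : ℝ → ℝ → ℝ} {A α β γ : ℝ}

theorem exists_lt_mul_rpow (hα : 0 < α) (hγ : 0 < γ) (b : ℝ) : ∃ K : ℝ≥0, b < α * (K : ℝ) ^ γ := by
  obtain ⟨K, hb, hK⟩ := ((((tendsto_rpow_atTop hγ).const_mul_atTop hα).eventually_gt_atTop b).and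
    (eventually_ge_atTop 0)).exists
  exact ⟨.mk K hK, hb⟩

theorem LipschitzOnStrips.nonempty_setOf_viscSuperOn (hH : LipschitzOnStrips H)
    (ha : ∀ x, 0 ≤ a x) : {lam | ∃ u, Continuous u ∧ ViscSuperOn a H lam univ u}.Nonempty := by
  obtain ⟨M, -, hM⟩ := hH 0
  exact ⟨M, fun _ => 0, continuous_const,
    viscSuperOn_const ha (fun x => (le_abs_self _).trans (hM x 0 (by simp))) 0⟩

theorem le_criticalValue {m : ℝ}
    (ha : ∀ x, a x ∈ Icc 0 A) (hα : 0 < α) (hγ : 1 < γ)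
    (hcoer : ∀ x p, α * |p| ^ γ - β ≤ H x p) (hH : LipschitzOnStrips H)
    (hm : ∀ x p, m ≤ H x p) : m ≤ CriticalValue a H := by
  refine le_csInf (hH.nonempty_setOf_viscSuperOn fun x => (ha x).1) ?_
  rintro mu ⟨u, huc, hu⟩
  obtain ⟨K, hK⟩ := exists_lt_mul_rpow hα (one_pos.trans hγ) (mu + β)
  exact hu.le_of_forall_le (hu.lipschitzWith huc (fun x => (ha x).2) hα hγ hcoer hK.le)
    (fun x => (ha x).2) hm

theorem exists_isBoundedSlopeSol_of_criticalValue_lt {κ K : ℝ≥0} {L T e : ℝ}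
    (ha : ∀ x, a x ∈ Icc 0 A) (hα : 0 < α) (hγ : 1 < γ)
    (hcoer : ∀ x p, α * |p| ^ γ - β ≤ H x p) (hH : LipschitzOnStrips H)
    (hσ : LipschitzWith κ fun x => √(a x)) (hL : CriticalValue a H < L)
    (hK : L + β ≤ α * (K : ℝ) ^ γ) (hT : 0 ≤ T) (he : 0 < e) :
    ∃ ε ∈ Ioo 0 e, ∃ P, IsBoundedSlopeSol (fun x => (√(a x) + ε) ^ 2) H L (2 * K + 1) T P := by
  obtain ⟨mu, ⟨v, hvc, hv⟩, hmu⟩ :=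
    exists_lt_of_csInf_lt (hH.nonempty_setOf_viscSuperOn fun x => (ha x).1) hL
  have hvK : LipschitzWith K v :=
    hv.lipschitzWith hvc (fun x => (ha x).2) hα hγ hcoer (by linarith)
  refine hv.exists_isBoundedSlopeSol hvK hσ (fun x => sqrt_nonneg _)
    (fun x => sq_sqrt (ha x).1) hH hmu (fun x => ?_) hT he
  have hpow : (K : ℝ) ^ γ < (2 * K + 1) ^ γ := by gcongr; linarith [K.coe_nonneg]
  have hcoer' := hcoer x (2 * K + 1)
  rw [abs_of_nonneg (by positivity)] at hcoer'
  linarith [mul_lt_mul_of_pos_left hpow hα]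

theorem exists_viscSolOn_of_criticalValue_le {κ : ℝ≥0} {lam : ℝ}
    (ha : ∀ x, a x ∈ Icc 0 A) (hα : 0 < α) (hγ : 1 < γ)
    (hcoer : ∀ x p, α * |p| ^ γ - β ≤ H x p) (hH : LipschitzOnStrips H)
    (hσ : LipschitzWith κ fun x => √(a x)) (hlam : CriticalValue a H ≤ lam) :
    ∃ u, Continuous u ∧ ViscSolOn a H lam univ u ∧ ContDiffOn ℝ 2 u {x | 0 < a x} := by
  obtain ⟨K, hK⟩ := exists_lt_mul_rpow hα (one_pos.trans hγ) (lam + 1 + β)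
  have happrox (n : ℕ) : ∃ ε ∈ Ioo (0 : ℝ) (1 / (n + 1)), ∃ P, IsBoundedSlopeSol
      (fun x => (√(a x) + ε) ^ 2) H (lam + 1 / (n + 1)) (2 * K + 1) n P := by
    have hpos : (0 : ℝ) < 1 / (n + 1) := by positivity
    have hle : (1 : ℝ) / (n + 1) ≤ 1 := (div_le_one (by positivity)).2 (by simp)
    exact exists_isBoundedSlopeSol_of_criticalValue_lt ha hα hγ hcoer hH hσ (by linarith)
      (by linarith) n.cast_nonneg hpos
  choose ε hε P hP using happrox
  have hε0 : Tendsto ε atTop (𝓝 0) := squeeze_zero (fun n => (hε n).1.le) (fun n => (hε n).2.le)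
    tendsto_one_div_add_atTop_nhds_zero_nat
  have hsq : (fun x => √(a x) ^ 2) = a := funext fun x => sq_sqrt (ha x).1
  refine exists_viscSolOn_of_isBoundedSlopeSol (l := atTop) tendsto_natCast_atTop_atTop hP
    (fun n x => sq_nonneg _) (fun x => ?_) (hsq ▸ hσ.continuous.pow 2) hH ?_
  · have := (((hσ.continuous.tendsto x).comp tendsto_snd).add (hε0.comp tendsto_fst)).pow 2
    rwa [add_zero, sq_sqrt (ha x).1] at this
  · simpa using tendsto_one_div_add_atTop_nhds_zero_nat.const_add lam

end

theorem HamClass.neg_one_div_le {α₀ α₁ γ : ℝ} {H : ℝ → ℝ → ℝ} (hH : HamClass α₀ α₁ γ H)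
    (hα₀ : 0 ≤ α₀) (x p : ℝ) : -1 / α₀ ≤ H x p := by
  have : 0 ≤ α₀ * |p| ^ γ := by positivity
  linarith [hH.1 x p, neg_div α₀ 1]

theorem mul_rpow_one_div_eq {α₀ γ lam : ℝ} (hα₀ : 0 < α₀) (hγ : γ ≠ 0) (hlam : 0 ≤ 1 + lam * α₀) :
    α₀ * (((1 + lam * α₀) / α₀ ^ 2) ^ (1 / γ)) ^ γ = lam + 1 / α₀ := by
  rw [one_div, rpow_inv_rpow (by positivity) hγ]
  field_simp
  ring

theorem statement_5_general {a : ℝ → ℝ} {H : ℝ → ℝ → ℝ} {κ : ℝ≥0} {A α₀ α₁ γ lam : ℝ}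
    (ha : ∀ x, a x ∈ Icc 0 A) (hσ : LipschitzWith κ fun x => √(a x)) (hα₀ : 0 < α₀) (hγ : 1 < γ)
    (hH : HamClass α₀ α₁ γ H) (hlam : CriticalValue a H ≤ lam) :
    (∃ u : ℝ → ℝ, Continuous u ∧ ViscSolOn a H lam univ u ∧
      (∀ x z, |u x - u z| ≤ ((1 + lam * α₀) / α₀ ^ 2) ^ (1 / γ) * |x - z|) ∧
      ContDiffOn ℝ 2 u {x | 0 < a x}) ∧
    sInf (range fun q : ℝ × ℝ => H q.1 q.2) ≤ CriticalValue a H ∧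
    -1 / α₀ ≤ sInf (range fun q : ℝ × ℝ => H q.1 q.2) := by
  have hreg := hH.lipschitzOnStrips hα₀ hγ.le
  have hbelow := hH.neg_one_div_le hα₀.le
  have hinf : sInf (range fun q : ℝ × ℝ => H q.1 q.2) ≤ CriticalValue a H :=
    le_criticalValue ha hα₀ hγ hH.1 hreg fun x p =>
      csInf_le ⟨_, forall_mem_range.2 fun q : ℝ × ℝ => hbelow q.1 q.2⟩ (mem_range_self (x, p))
  have hinf' : -1 / α₀ ≤ sInf (range fun q : ℝ × ℝ => H q.1 q.2) :=
    le_csInf (range_nonempty _) (forall_mem_range.2 fun q => hbelow q.1 q.2)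
  refine ⟨?_, hinf, hinf'⟩
  obtain ⟨u, huc, hu, huC2⟩ := exists_viscSolOn_of_criticalValue_le ha hα₀ hγ hH.1 hreg hσ hlam
  have hlam' : 0 ≤ 1 + lam * α₀ := by
    linarith [(div_le_iff₀ hα₀).1 (hinf'.trans (hinf.trans hlam))]
  have hr : 0 ≤ ((1 + lam * α₀) / α₀ ^ 2) ^ (1 / γ) := by positivity
  have hlip : LipschitzWith (.mk _ hr) u := hu.2.lipschitzWith huc (fun x => (ha x).2) hα₀ hγ hH.1
    (mul_rpow_one_div_eq hα₀ (one_pos.trans hγ).ne' hlam').ge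
  exact ⟨u, huc, hu, fun x z => hlip.dist_le_mul x z, huC2⟩

/-- Theorem `teo existence solutions`: for every `lam ≥ λ₀` the stationary
equation `a u'' + H(x,u') = lam` admits a viscosity solution on `ℝ`, which is `K`-Lipschitz
with `K = C(γ) ((κ √(1+α₁+|λ|)/α₀)^{2/(γ-1)} + ((1+λα₀)/α₀²)^{1/γ})`, `C` depending only
on `γ`, and of class `C²` on every open interval contained in `{a > 0}`.
Moreover `λ₀ ≥ inf H ≥ -1/α₀`. -/
theorem statement_5 :
    ∃ C : ℝ → ℝ, (∀ γ : ℝ, 0 < C γ) ∧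
      ∀ (a : ℝ → ℝ) (H : ℝ → ℝ → ℝ) (κ α0 α1 γ lam0 lam : ℝ),
        (∀ x, a x ∈ Set.Icc (0:ℝ) 1) →
        0 < κ → (∀ x y : ℝ, |Real.sqrt (a x) - Real.sqrt (a y)| ≤ κ * |x - y|) →
        0 < α0 → 0 < α1 → 2 < γ →
        HamClass α0 α1 γ H →
        lam0 = CriticalValue a H →
        lam0 ≤ lam →
        (∃ u : ℝ → ℝ,
          Continuous u ∧
          ViscSolOn a H lam Set.univ u ∧
          (∀ x z : ℝ, |u x - u z| ≤
            (C γ * ((κ * Real.sqrt (1 + α1 + |lam|) / α0) ^ ((2:ℝ) / (γ - 1)) +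
              ((1 + lam * α0) / α0 ^ 2) ^ ((1:ℝ) / γ))) * |x - z|) ∧
          (∀ I : Set ℝ, IsOpen I → IsPreconnected I → I ⊆ {x : ℝ | 0 < a x} →
            ContDiffOn ℝ 2 u I)) ∧
        sInf (Set.range fun q : ℝ × ℝ => H q.1 q.2) ≤ lam0 ∧
        -1 / α0 ≤ sInf (Set.range fun q : ℝ × ℝ => H q.1 q.2) := by
  refine ⟨fun _ => 1, fun _ => one_pos, ?_⟩
  rintro a H κ α0 α1 γ lam0 lam ha hκ hσ hα0 - hγ hH rfl hlam
  obtain ⟨⟨u, huc, hu, hlip, huC2⟩, hbounds⟩ := statement_5_general ha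
    (LipschitzWith.of_dist_le' hσ) hα0 (one_lt_two.trans hγ) hH hlam
  refine ⟨⟨u, huc, hu, fun x z => (hlip x z).trans ?_, fun I _ _ hI => huC2.mono hI⟩, hbounds⟩
  rw [one_mul]
  gcongr
  exact le_add_of_nonneg_left (by positivity)
end
end

section
/- Let H ∈ 𝓗_sqc(α0,α1,γ,η) with γ > 2, and define λ̂(x) := min_{p∈ℝ} H(x,p) and p̂(x) the unique minimizer of H(x,·). Then the functions λ̂, p̂ : ℝ → ℝ are bounded and κ̂-Lipschitz, for some constant κ̂ = κ̂(α0,α1,γ,η) depending only on α0, α1, γ and η. -/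
open Real Set Filter Topology MeasureTheory

noncomputable section

/-!
Coercivity and the bound `H(x, 0) ≤ α₁` confine the minimizers `p̂(x)` to a fixed ball, on which
(H3) makes `H(·, p)` Lipschitz with a constant `K`. Comparing `H(x, ·)` and `H(y, ·)` at the two
points `p̂(x)` and `p̂(y)` shows that the minimum values differ by at most `K |x - y|`. Strict
quasiconvexity makes each minimum sharp, `H(x, p) ≥ H(x, p̂(x)) + η |p - p̂(x)|`. Adding this for
`(x, p̂(y))` and `(y, p̂(x))` and rearranging leaves only differences of `H(x, ·)` and `H(y, ·)` at
a common point, whence `2 η |p̂(x) - p̂(y)| ≤ 2 K |x - y|`.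
-/

section SharpMinimum

variable {P : Type*} {f g : P → ℝ} {p q : P} {δ : ℝ}

theorem abs_sub_le_of_isMinOn_univ (hp : IsMinOn f univ p) (hq : IsMinOn g univ q)
    (hfgp : |f p - g p| ≤ δ) (hfgq : |f q - g q| ≤ δ) : |f p - g q| ≤ δ := by
  have hfpq : f p ≤ f q := hp (mem_univ q)
  have hgqp : g q ≤ g p := hq (mem_univ p)
  rw [abs_le] at *
  constructor <;> linarith

variable [PseudoMetricSpace P] {η : ℝ}

/-- `p` is a sharp minimizer of `f` with modulus `η`: away from `p`, the function `f` grows at least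
linearly with slope `η`. This is the form in which strict quasiconvexity is used. -/
def IsSharpMin (η : ℝ) (f : P → ℝ) (p : P) : Prop :=
  ∀ q, f p + η * dist q p ≤ f q

namespace IsSharpMin

theorem isMinOn_univ (hη : 0 ≤ η) (hp : IsSharpMin η f p) : IsMinOn f univ p := fun q _ =>
  (le_add_of_nonneg_right (mul_nonneg hη dist_nonneg)).trans (hp q)

theorem dist_le (hη : 0 < η) (hp : IsSharpMin η f p) (hq : IsSharpMin η g q)
    (hfgp : |f p - g p| ≤ δ) (hfgq : |f q - g q| ≤ δ) : dist p q ≤ δ / η := by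
  have hfpq : f p + η * dist p q ≤ f q := dist_comm q p ▸ hp q
  have hgqp : g q + η * dist p q ≤ g p := hq p
  rw [le_div_iff₀' hη]
  linarith [neg_le_of_abs_le hfgp, le_of_abs_le hfgq]

end IsSharpMin

end SharpMinimum

section PowerGrowth

variable {E : Type*} [SeminormedAddCommGroup E] {f : E → ℝ} {p : E} {α0 α1 γ : ℝ}

/-- The growth condition (H1), for a single function on a seminormed group. -/
def HasPowerGrowth (α0 α1 γ : ℝ) (f : E → ℝ) : Prop :=
  ∀ p, α0 * ‖p‖ ^ γ - 1 / α0 ≤ f p ∧ f p ≤ α1 * (‖p‖ ^ γ + 1)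

/-- The bound on `‖p‖ ^ γ` for minimizers `p` of functions with power growth, obtained by solving
`α0 * ‖p‖ ^ γ - 1 / α0 ≤ α1`. -/
def minimizerPowBound (α0 α1 : ℝ) : ℝ := (α1 + 1 / α0) / α0

namespace HasPowerGrowth

theorem minimum_le (hγ : γ ≠ 0) (hf : HasPowerGrowth α0 α1 γ f) (hp : IsMinOn f univ p) :
    f p ≤ α1 :=
  calc f p ≤ f 0 := hp (mem_univ 0)
    _ ≤ α1 * (‖(0 : E)‖ ^ γ + 1) := (hf 0).2
    _ = α1 := by rw [norm_zero, zero_rpow hγ, zero_add, mul_one]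

theorem abs_minimum_le (hα0 : 0 < α0) (hα1 : 0 ≤ α1) (hγ : γ ≠ 0)
    (hf : HasPowerGrowth α0 α1 γ f) (hp : IsMinOn f univ p) : |f p| ≤ α1 + 1 / α0 := by
  have upper : f p ≤ α1 := hf.minimum_le hγ hp
  have lower : α0 * ‖p‖ ^ γ - 1 / α0 ≤ f p := (hf p).1
  have power_nonneg : 0 ≤ α0 * ‖p‖ ^ γ := by positivity
  have inv_nonneg : 0 ≤ 1 / α0 := by positivity
  rw [abs_le]
  constructor <;> linarith

theorem norm_minimizer_rpow_le (hα0 : 0 < α0) (hγ : γ ≠ 0) (hf : HasPowerGrowth α0 α1 γ f)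
    (hp : IsMinOn f univ p) : ‖p‖ ^ γ ≤ minimizerPowBound α0 α1 := by
  rw [minimizerPowBound, le_div_iff₀' hα0]
  linarith [(hf p).1, hf.minimum_le hγ hp]

theorem norm_minimizer_le (hα0 : 0 < α0) (hγ : 0 < γ) (hf : HasPowerGrowth α0 α1 γ f)
    (hp : IsMinOn f univ p) : ‖p‖ ≤ minimizerPowBound α0 α1 ^ γ⁻¹ := by
  have power_le := hf.norm_minimizer_rpow_le hα0 hγ.ne' hp
  have bound_nonneg : 0 ≤ minimizerPowBound α0 α1 := (by positivity : 0 ≤ ‖p‖ ^ γ).trans power_le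
  exact (le_rpow_inv_iff_of_pos (norm_nonneg p) bound_nonneg hγ).2 power_le

end HasPowerGrowth

end PowerGrowth

/-- The Lipschitz constant that (H3) gives for `H(·, p)` when `p` is a minimizer; it is also one for
the minimum value. -/
def minimumLipschitzConst (α0 α1 : ℝ) : ℝ := α1 * (minimizerPowBound α0 α1 + 1)

/-- A common Lipschitz constant for the minimum value and the minimizer. -/
def sharpMinLipschitzConst (α0 α1 η : ℝ) : ℝ :=
  max (minimumLipschitzConst α0 α1) (minimumLipschitzConst α0 α1 / η)

theorem sharpMinLipschitzConst_pos {α0 α1 : ℝ} (hα0 : 0 < α0) (hα1 : 0 < α1) (η : ℝ) :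
    0 < sharpMinLipschitzConst α0 α1 η := by
  refine lt_max_of_lt_left ?_
  unfold minimumLipschitzConst minimizerPowBound
  positivity

section Family

variable {X E : Type*} [PseudoMetricSpace X] [SeminormedAddCommGroup E] {H : X → E → ℝ}
  {phat : X → E} {α0 α1 γ η : ℝ}

theorem abs_sub_le_at_minimizer (hα0 : 0 < α0) (hα1 : 0 ≤ α1) (hγ : γ ≠ 0)
    (growth : ∀ x, HasPowerGrowth α0 α1 γ (H x))
    (lipschitz : ∀ x y p, |H x p - H y p| ≤ α1 * (‖p‖ ^ γ + 1) * dist x y)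
    (hmin : ∀ x, IsMinOn (H x) univ (phat x)) (x y z : X) :
    |H x (phat z) - H y (phat z)| ≤ minimumLipschitzConst α0 α1 * dist x y := by
  refine (lipschitz x y (phat z)).trans ?_
  unfold minimumLipschitzConst
  gcongr
  exact (growth z).norm_minimizer_rpow_le hα0 hγ (hmin z)

theorem statement_8_general (hα0 : 0 < α0) (hα1 : 0 < α1) (hγ : 0 < γ) (hη : 0 < η)
    (growth : ∀ x, HasPowerGrowth α0 α1 γ (H x))
    (lipschitz : ∀ x y p, |H x p - H y p| ≤ α1 * (‖p‖ ^ γ + 1) * dist x y)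
    (sharp : ∀ x, IsSharpMin η (H x) (phat x)) :
    0 < sharpMinLipschitzConst α0 α1 η ∧
    (∃ M : ℝ, ∀ x, |H x (phat x)| ≤ M ∧ ‖phat x‖ ≤ M) ∧
    (∀ x y, |H x (phat x) - H y (phat y)| ≤ sharpMinLipschitzConst α0 α1 η * dist x y) ∧
    (∀ x y, dist (phat x) (phat y) ≤ sharpMinLipschitzConst α0 α1 η * dist x y) := by
  have hmin x : IsMinOn (H x) univ (phat x) := (sharp x).isMinOn_univ hη.le
  have near := abs_sub_le_at_minimizer hα0 hα1.le hγ.ne' growth lipschitz hmin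
  refine ⟨sharpMinLipschitzConst_pos hα0 hα1 η,
    ⟨max (α1 + 1 / α0) (minimizerPowBound α0 α1 ^ γ⁻¹), fun x => ⟨?_, ?_⟩⟩,
    fun x y => ?_, fun x y => ?_⟩
  · exact le_max_of_le_left ((growth x).abs_minimum_le hα0 hα1.le hγ.ne' (hmin x))
  · exact le_max_of_le_right ((growth x).norm_minimizer_le hα0 hγ (hmin x))
  · refine (abs_sub_le_of_isMinOn_univ (hmin x) (hmin y) (near x y x) (near x y y)).trans ?_
    gcongr
    exact le_max_left _ _
  · refine ((sharp x).dist_le hη (sharp y) (near x y x) (near x y y)).trans ?_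
    rw [mul_div_right_comm]
    gcongr
    exact le_max_right _ _

end Family

namespace HamSqc

variable {α0 α1 γ η : ℝ} {H : ℝ → ℝ → ℝ} {phat : ℝ → ℝ}

theorem hasPowerGrowth (hH : HamSqc α0 α1 γ η H phat) (x : ℝ) : HasPowerGrowth α0 α1 γ (H x) :=
  fun p => ⟨hH.1.1 x p, hH.1.2.1 x p⟩

theorem abs_sub_le (hH : HamSqc α0 α1 γ η H phat) (x y p : ℝ) :
    |H x p - H y p| ≤ α1 * (|p| ^ γ + 1) * |x - y| :=
  hH.1.2.2.2 x y p

theorem isSharpMin (hH : HamSqc α0 α1 γ η H phat) (x : ℝ) : IsSharpMin η (H x) (phat x) := by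
  obtain ⟨-, -, -, decreasing, increasing⟩ := hH
  intro q
  rw [← le_sub_iff_add_le']
  rcases lt_trichotomy q (phat x) with hlt | rfl | hgt
  · exact decreasing x q (phat x) hlt le_rfl
  · simp
  · rw [dist_comm]
    exact increasing x (phat x) q le_rfl hgt

end HamSqc

/-- Lemma `appC lemma 1`: for `H ∈ 𝓗_sqc(α₀,α₁,γ,η)` with `γ > 2`, the
functions `λ̂(x) := min_p H(x,p)` and `p̂(x)` (the unique minimizer) are bounded and
`κ̂`-Lipschitz, with `κ̂ = κ̂(α₀,α₁,γ,η)` depending only on `α₀, α₁, γ, η`. -/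
theorem statement_8 :
    ∃ κhat : ℝ → ℝ → ℝ → ℝ → ℝ,
      ∀ (H : ℝ → ℝ → ℝ) (phat : ℝ → ℝ) (α0 α1 γ η : ℝ),
        0 < α0 → 0 < α1 → 2 < γ → 0 < η →
        HamSqc α0 α1 γ η H phat →
        0 < κhat α0 α1 γ η ∧
        (∃ M : ℝ, ∀ x : ℝ, |H x (phat x)| ≤ M ∧ |phat x| ≤ M) ∧
        (∀ x y : ℝ, |H x (phat x) - H y (phat y)| ≤ κhat α0 α1 γ η * |x - y|) ∧
        (∀ x y : ℝ, |phat x - phat y| ≤ κhat α0 α1 γ η * |x - y|) :=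
  ⟨fun α0 α1 _ η => sharpMinLipschitzConst α0 α1 η, fun _ _ _ _ _ _ hα0 hα1 hγ hη hH =>
    statement_8_general hα0 hα1 (two_pos.trans hγ) hη hH.hasPowerGrowth hH.abs_sub_le hH.isSharpMin⟩
end
end

section
/- Let a : ℝ → [0,1] satisfy (A1') and have √a κ-Lipschitz, and H ∈ 𝓗_sqc(α0,α1,γ,η) with γ > 2. Let λ0 := inf{μ : a u'' + H(x,u') = μ admits a continuous viscosity supersolution on ℝ}, let λ > λ0 and let u_{λ0} be a Lipschitz viscosity solution of a u'' + H(x,u') = λ0 on ℝ. Then there exist functions f⁻_λ, f⁺_λ ∈ C¹(A), where A := {a > 0}, satisfying f⁻_λ < u'_{λ0} < f⁺_λ on A and solving the ODE a(x)f' + H(x,f) = λ on A. Furthermore there exists a constant K_λ = K(α0,α1,γ,λ), depending only on α0, α1, γ and λ, such that |f^±_λ(x)| ≤ K_λ for all x ∈ A. -/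
open Real Set Filter Topology MeasureTheory

noncomputable section

/-!
On `A = {a > 0}` the critical solution `u` is classical: test functions touching a Lipschitz
function have bounded slope, so the equation bounds `u''` on both sides in the viscosity sense,
hence `u` is `C¹`, and then `C²`. Thus `v = u'` solves `a v' + H(x, v) = λ₀`, which makes it a
strict subsolution of `a f' + H(x, f) = λ`.

Coercivity gives `K` with `H(x, p) > λ` for `|p| ≥ K`, so the constants `±K` are strict
supersolutions. Moreover `|v| ≤ K`: where `v ≥ K` one has `a v' ≤ λ₀ - λ < 0`, and since `√a` is
Lipschitz, `v` drops by a fixed amount on an interval of length comparable to `√a` to the left of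
each point, so `sup v > K` would be improvable; the bound from below follows by reflection.

A solution started between an ordered strict subsolution and strict supersolution stays between
them. Solving forward in time between `v` and `K` on compact subintervals, and taking a limit along
an exhaustion of each component of `A`, gives `f⁺`; solving backward between `-K` and `v` gives
`f⁻`.
-/

/-- `u'' ≥ g` on `S` in the viscosity sense. The inequality `u'' ≤ g` is expressed by
`ViscDeriv2GE (-g) S (-u)`. -/
def ViscDeriv2GE (g : ℝ → ℝ) (S : Set ℝ) (u : ℝ → ℝ) : Prop :=
  ∀ φ : ℝ → ℝ, ContDiff ℝ 2 φ → ∀ x ∈ S, IsLocalMax (fun y => u y - φ y) x →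
    g x ≤ deriv (deriv φ) x

theorem deriv_deriv_linear_sub_quadratic (s δ y x : ℝ) :
    deriv (deriv fun t : ℝ => s * t - δ * (t - y) ^ 2) x = -(2 * δ) := by
  have hderiv : deriv (fun t : ℝ => s * t - δ * (t - y) ^ 2) = fun t => s - 2 * δ * (t - y) := by
    ext t
    have := ((hasDerivAt_id t).const_mul s).sub
      ((((hasDerivAt_id t).sub_const y).pow 2).const_mul δ)
    refine HasDerivAt.deriv (this.congr_deriv ?_)
    simp only [id, Nat.cast_ofNat]
    ring
  have := (((hasDerivAt_id x).sub_const y).const_mul (2 * δ)).const_sub s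
  rw [hderiv]
  exact (this.congr_deriv (by ring)).deriv

theorem exists_contDiff_deriv_deriv_eq {g : ℝ → ℝ} (hg : Continuous g) :
    ∃ G : ℝ → ℝ, ContDiff ℝ 2 G ∧ deriv (deriv G) = g := by
  have antideriv : ∀ f : ℝ → ℝ, Continuous f →
      ∃ F : ℝ → ℝ, Differentiable ℝ F ∧ deriv F = f := fun f hf =>
    have hF := fun x => intervalIntegral.integral_hasDerivAt_right (hf.intervalIntegrable 0 x)
      hf.stronglyMeasurable.stronglyMeasurableAtFilter hf.continuousAt
    ⟨_, fun x => (hF x).differentiableAt, funext fun x => (hF x).deriv⟩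
  obtain ⟨G', hG'diff, hG'⟩ := antideriv g hg
  obtain ⟨G, hGdiff, hG⟩ := antideriv G' hG'diff.continuous
  refine ⟨G, ?_, by rw [hG, hG']⟩
  rw [← one_add_one_eq_two, contDiff_succ_iff_deriv, hG, contDiff_one_iff_deriv, hG']
  exact ⟨hGdiff, by simp, hG'diff, hg⟩

theorem deriv_neg_eq_neg_deriv (f : ℝ → ℝ) : deriv (-f) = -deriv f :=
  deriv.neg'

theorem ViscDeriv2GE.mono {g g' u : ℝ → ℝ} {S T : Set ℝ} (h : ViscDeriv2GE g T u) (hST : S ⊆ T)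
    (hg : ∀ x ∈ S, g' x ≤ g x) : ViscDeriv2GE g' S u :=
  fun φ hφ x hx hmax => (hg x hx).trans (h φ hφ x (hST hx) hmax)

theorem ViscDeriv2GE.sub_contDiff {g u G : ℝ → ℝ} {S : Set ℝ} (h : ViscDeriv2GE g S u)
    (hG : ContDiff ℝ 2 G) : ViscDeriv2GE (g - deriv (deriv G)) S (u - G) := by
  intro φ hφ x hx hmax
  have hderiv : deriv (φ + G) = deriv φ + deriv G := funext fun y =>
    deriv_add (hφ.differentiable two_ne_zero y) (hG.differentiable two_ne_zero y)
  have hderiv2 : deriv (deriv (φ + G)) x = deriv (deriv φ) x + deriv (deriv G) x := by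
    rw [hderiv]
    exact deriv_add (hφ.differentiable_deriv_two x) (hG.differentiable_deriv_two x)
  have hmax' : IsLocalMax (fun y => u y - (φ + G) y) x := by
    simpa only [Pi.sub_apply, Pi.add_apply, sub_sub, add_comm] using hmax
  have := h (φ + G) (hφ.add hG) x hx hmax'
  simp only [Pi.sub_apply]
  linarith

theorem ViscDeriv2GE.convexOn {u : ℝ → ℝ} {S : Set ℝ} (h : ViscDeriv2GE 0 S u)
    (hS : Convex ℝ S) (hu : ContinuousOn u S) : ConvexOn ℝ S u := by
  refine convexOn_of_slope_mono_adjacent hS fun {x y z} hx hz hxy hyz => ?_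
  by_contra! hslope
  obtain ⟨s, hs_right, hs_left⟩ := exists_between hslope
  rw [div_lt_iff₀ (sub_pos.2 hyz)] at hs_right
  rw [lt_div_iff₀ (sub_pos.2 hxy)] at hs_left
  -- `u - s • id` is larger at `y` than at `x` and `z`; so is its sum with a flat parabola.
  have perturb : ∀ t, 0 < (u y - s * y) - (u t - s * t) →
      ∀ᶠ δ in 𝓝[>] (0 : ℝ), δ * (t - y) ^ 2 < (u y - s * y) - (u t - s * t) := by
    intro t ht
    have : Tendsto (fun δ : ℝ => δ * (t - y) ^ 2) (𝓝[>] 0) (𝓝 (0 * (t - y) ^ 2)) :=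
      (tendsto_id.mul_const _).mono_left nhdsWithin_le_nhds
    rw [zero_mul] at this
    exact this.eventually_lt_const ht
  obtain ⟨δ, hδ, hδx, hδz⟩ := (eventually_mem_nhdsWithin.and
    ((perturb x (by linarith)).and (perturb z (by linarith)))).exists
  have hsub : Icc x z ⊆ S := hS.ordConnected.out hx hz
  obtain ⟨t, ht, hmax⟩ : ∃ t ∈ Ioo x z,
      IsLocalMax (fun t => u t - (s * t - δ * (t - y) ^ 2)) t := by
    refine isCompact_Icc.exists_isLocalMax_mem_open (z := y) Ioo_subset_Icc_self
      ((hu.mono hsub).sub (by fun_prop)) ⟨hxy.le, hyz.le⟩ ?_ isOpen_Ioo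
    rw [Icc_sdiff_Ioo_same (hxy.trans hyz).le]
    rintro t (rfl | rfl) <;> simp only [sub_self] <;> linarith
  have := h _ (by fun_prop) t (hsub (Ioo_subset_Icc_self ht)) hmax
  rw [deriv_deriv_linear_sub_quadratic, Pi.zero_apply] at this
  linarith [mem_Ioi.1 hδ]

theorem ViscDeriv2GE.convexOn_sub {g u : ℝ → ℝ} {S : Set ℝ} (h : ViscDeriv2GE g S u)
    (hS : Convex ℝ S) (hu : ContinuousOn u S) {G : ℝ → ℝ} (hG : ContDiff ℝ 2 G)
    (hGg : deriv (deriv G) = g) : ConvexOn ℝ S (u - G) := by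
  refine ViscDeriv2GE.convexOn ?_ hS (hu.sub hG.continuous.continuousOn)
  simpa only [hGg, sub_self] using h.sub_contDiff hG

theorem differentiableAt_of_convexOn_of_convexOn_of_add {f g : ℝ → ℝ} {S : Set ℝ} {x : ℝ}
    (hf : ConvexOn ℝ S f) (hg : ConvexOn ℝ S g) (hx : x ∈ interior S)
    (hfg : DifferentiableAt ℝ (f + g) x) : DifferentiableAt ℝ f x := by
  have f_right := (hf.differentiableWithinAt_Ioi_of_mem_interior hx).hasDerivWithinAt
  have f_left := (hf.differentiableWithinAt_Iio_of_mem_interior hx).hasDerivWithinAt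
  have g_right := (hg.differentiableWithinAt_Ioi_of_mem_interior hx).hasDerivWithinAt
  have g_left := (hg.differentiableWithinAt_Iio_of_mem_interior hx).hasDerivWithinAt
  have right_eq := (uniqueDiffWithinAt_Ioi x).eq_deriv _ (f_right.add g_right)
    hfg.hasDerivAt.hasDerivWithinAt
  have left_eq := (uniqueDiffWithinAt_Iio x).eq_deriv _ (f_left.add g_left)
    hfg.hasDerivAt.hasDerivWithinAt
  -- The jumps of `f'` and of `g'` at `x` are nonnegative and their sum vanishes.
  have f_left_eq_right : derivWithin f (Iio x) x = derivWithin f (Ioi x) x := by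
    linarith [hf.leftDeriv_le_rightDeriv_of_mem_interior hx,
      hg.leftDeriv_le_rightDeriv_of_mem_interior hx]
  rw [f_left_eq_right] at f_left
  have := (hasDerivWithinAt_Iio_iff_Iic.1 f_left).union (hasDerivWithinAt_Ioi_iff_Ici.1 f_right)
  rw [Iic_union_Ici, hasDerivWithinAt_univ] at this
  exact this.differentiableAt

theorem continuousOn_of_monotoneOn_of_monotoneOn_of_add {f g : ℝ → ℝ} {S : Set ℝ}
    (hf : MonotoneOn f S) (hg : MonotoneOn g S) (hfg : ContinuousOn (f + g) S) :
    ContinuousOn f S := by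
  have key : ∀ x ∈ S, ∀ y ∈ S, dist (f y) (f x) ≤ dist ((f + g) y) ((f + g) x) := by
    intro x hx y hy
    simp only [Real.dist_eq, Pi.add_apply]
    rcases le_total x y with hxy | hyx
    · have := hf hx hy hxy
      have := hg hx hy hxy
      rw [abs_of_nonneg, abs_of_nonneg] <;> linarith
    · have := hf hy hx hyx
      have := hg hy hx hyx
      rw [abs_of_nonpos, abs_of_nonpos] <;> linarith
  intro x hx
  have h := tendsto_iff_dist_tendsto_zero.1 (hfg x hx)
  refine tendsto_iff_dist_tendsto_zero.2 (squeeze_zero' (.of_forall fun _ => dist_nonneg) ?_ h)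
  filter_upwards [self_mem_nhdsWithin] with y hy using key x hx y hy

theorem exists_Icc_subset_of_mem {U : Set ℝ} {x : ℝ} (hU : IsOpen U) (hx : x ∈ U) :
    ∃ c d : ℝ, x ∈ Ioo c d ∧ Icc c d ⊆ U := by
  obtain ⟨ε, hε, hball⟩ := Metric.nhds_basis_closedBall.mem_iff.1 (hU.mem_nhds hx)
  rw [Real.closedBall_eq_Icc] at hball
  exact ⟨x - ε, x + ε, ⟨by linarith, by linarith⟩, hball⟩

section C1Regularity

variable {u g₁ g₂ : ℝ → ℝ} {S : Set ℝ}

theorem ViscDeriv2GE.differentiableAt (h₁ : ViscDeriv2GE g₁ S u) (h₂ : ViscDeriv2GE (-g₂) S (-u))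
    (hS : Convex ℝ S) (hu : ContinuousOn u S) (hg₁ : Continuous g₁) (hg₂ : Continuous g₂)
    {x : ℝ} (hx : x ∈ interior S) : DifferentiableAt ℝ u x := by
  obtain ⟨G₁, hG₁, hG₁''⟩ := exists_contDiff_deriv_deriv_eq hg₁
  obtain ⟨G₂, hG₂, hG₂''⟩ := exists_contDiff_deriv_deriv_eq hg₂.neg
  have hconv₁ := h₁.convexOn_sub hS hu hG₁ hG₁''
  have hconv₂ := h₂.convexOn_sub hS hu.neg hG₂ hG₂''
  have hdiff₁ := hG₁.differentiable two_ne_zero x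
  have hdiff₂ := hG₂.differentiable two_ne_zero x
  have := differentiableAt_of_convexOn_of_convexOn_of_add hconv₁ hconv₂ hx (by
    rw [show u - G₁ + (-u - G₂) = -G₁ - G₂ by ring]
    exact hdiff₁.neg.sub hdiff₂)
  simpa only [sub_add_cancel] using this.add hdiff₁

theorem ViscDeriv2GE.monotoneOn_deriv_sub (h : ViscDeriv2GE g₁ S u) (hS : Convex ℝ S)
    (hu : ∀ x ∈ S, DifferentiableAt ℝ u x) {G : ℝ → ℝ} (hG : ContDiff ℝ 2 G)
    (hGg : deriv (deriv G) = g₁) : MonotoneOn (deriv u - deriv G) S := by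
  have hdiffG := hG.differentiable two_ne_zero
  have hconv := h.convexOn_sub hS
    (fun x hx => (hu x hx).continuousAt.continuousWithinAt) hG hGg
  refine (hconv.monotoneOn_deriv fun x hx => (hu x hx).sub (hdiffG x)).congr fun x hx => ?_
  exact deriv_sub (hu x hx) (hdiffG x)

theorem ViscDeriv2GE.continuousOn_deriv (h₁ : ViscDeriv2GE g₁ S u)
    (h₂ : ViscDeriv2GE (-g₂) S (-u)) (hS : Convex ℝ S) (hu : ∀ x ∈ S, DifferentiableAt ℝ u x)
    (hg₁ : Continuous g₁) (hg₂ : Continuous g₂) : ContinuousOn (deriv u) S := by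
  obtain ⟨G₁, hG₁, hG₁''⟩ := exists_contDiff_deriv_deriv_eq hg₁
  obtain ⟨G₂, hG₂, hG₂''⟩ := exists_contDiff_deriv_deriv_eq hg₂.neg
  have hmono₁ := h₁.monotoneOn_deriv_sub hS hu hG₁ hG₁''
  have hmono₂ := h₂.monotoneOn_deriv_sub hS (fun x hx => (hu x hx).neg) hG₂ hG₂''
  have hcont₁ := hG₁.differentiable_deriv_two.continuous
  have hcont₂ := hG₂.differentiable_deriv_two.continuous
  have := continuousOn_of_monotoneOn_of_monotoneOn_of_add hmono₁ hmono₂ (by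
    rw [deriv_neg_eq_neg_deriv,
      show deriv u - deriv G₁ + (-deriv u - deriv G₂) = -deriv G₁ - deriv G₂ by ring]
    exact (hcont₁.neg.sub hcont₂).continuousOn)
  simpa only [sub_add_cancel] using this.add hcont₁.continuousOn

theorem ViscDeriv2GE.hasDerivAt_deriv (h₁ : ViscDeriv2GE g₁ S u) (h₂ : ViscDeriv2GE (-g₁) S (-u))
    (hS : Convex ℝ S) (hu : ∀ x ∈ S, DifferentiableAt ℝ u x) (hg₁ : Continuous g₁)
    {x : ℝ} (hx : x ∈ interior S) : HasDerivAt (deriv u) (g₁ x) x := by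
  obtain ⟨G, hG, hG''⟩ := exists_contDiff_deriv_deriv_eq hg₁
  have hmono := h₁.monotoneOn_deriv_sub hS hu hG hG''
  have hanti : MonotoneOn (-deriv u - -deriv G) S := by
    rw [← deriv_neg_eq_neg_deriv, ← deriv_neg_eq_neg_deriv]
    exact h₂.monotoneOn_deriv_sub hS (fun x hx => (hu x hx).neg) hG.neg
      (by rw [deriv_neg_eq_neg_deriv, deriv_neg_eq_neg_deriv, hG''])
  have hconst : ∀ y ∈ S, deriv u y = deriv G y + (deriv u x - deriv G x) := by
    have hxS := interior_subset hx
    intro y hy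
    rcases le_total x y with hxy | hyx
    · have := hmono hxS hy hxy
      have := hanti hxS hy hxy
      simp only [Pi.sub_apply, Pi.neg_apply] at *
      linarith
    · have := hmono hy hxS hyx
      have := hanti hy hxS hyx
      simp only [Pi.sub_apply, Pi.neg_apply] at *
      linarith
  have hG' : HasDerivAt (deriv G) (g₁ x) x := hG'' ▸ (hG.differentiable_deriv_two x).hasDerivAt
  exact (hG'.add_const _).congr_of_eventuallyEq
    (eventually_of_mem (mem_interior_iff_mem_nhds.1 hx) hconst)

theorem ViscDeriv2GE.hasDerivAt_deriv_of_continuousOn (h₁ : ViscDeriv2GE g₁ S u)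
    (h₂ : ViscDeriv2GE (-g₁) S (-u)) (hS : IsOpen S) (hu : ∀ x ∈ S, DifferentiableAt ℝ u x)
    (hg₁ : ContinuousOn g₁ S) {x : ℝ} (hx : x ∈ S) : HasDerivAt (deriv u) (g₁ x) x := by
  obtain ⟨c, d, hxcd, hcd⟩ := exists_Icc_subset_of_mem hS hx
  have hle : c ≤ d := (hxcd.1.trans hxcd.2).le
  have hext : ∀ y ∈ Icc c d, IccExtend hle ((Icc c d).domRestrict g₁) y = g₁ y :=
    fun y hy => IccExtend_of_mem hle _ hy
  rw [← hext x (Ioo_subset_Icc_self hxcd)]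
  refine ViscDeriv2GE.hasDerivAt_deriv (S := Icc c d) (h₁.mono hcd fun y hy => (hext y hy).le)
    (h₂.mono hcd fun y hy => neg_le_neg (hext y hy).ge) (convex_Icc c d)
    (fun y hy => hu y (hcd hy)) (hg₁.mono hcd).domRestrict.Icc_extend' ?_
  rwa [interior_Icc]

end C1Regularity

theorem abs_deriv_le_of_isLocalMax_sub {u φ : ℝ → ℝ} {L : NNReal} {x : ℝ}
    (hu : LipschitzWith L u) (hφ : DifferentiableAt ℝ φ x)
    (hmax : IsLocalMax (fun y => u y - φ y) x) : |deriv φ x| ≤ L := by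
  have hslope := hasDerivAt_iff_tendsto_slope.1 hφ.hasDerivAt
  have lower : ∀ᶠ y in 𝓝 x, -(L * |y - x|) ≤ φ y - φ x := by
    filter_upwards [hmax] with y hy
    have := (abs_le.1 (hu.dist_le_mul y x)).1
    rw [Real.dist_eq] at this
    linarith
  refine abs_le.2 ⟨ge_of_tendsto (hslope.mono_left (nhdsGT_le_nhdsNE x)) ?_,
    le_of_tendsto (hslope.mono_left (nhdsLT_le_nhdsNE x)) ?_⟩
  · filter_upwards [self_mem_nhdsWithin, mem_nhdsWithin_of_mem_nhds lower] with y hy hle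
    have hpos : 0 < y - x := sub_pos.2 hy
    rw [abs_of_pos hpos] at hle
    rw [slope_def_field, le_div_iff₀ hpos]
    linarith
  · filter_upwards [self_mem_nhdsWithin, mem_nhdsWithin_of_mem_nhds lower] with y hy hle
    have hneg : y - x < 0 := sub_neg.2 hy
    rw [abs_of_neg hneg] at hle
    rw [slope_def_field, div_le_iff_of_neg hneg]
    linarith

theorem deriv_eq_of_isLocalMax_sub {u φ : ℝ → ℝ} {x : ℝ} (hu : DifferentiableAt ℝ u x)
    (hφ : DifferentiableAt ℝ φ x) (hmax : IsLocalMax (fun y => u y - φ y) x) :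
    deriv φ x = deriv u x :=
  (sub_eq_zero.1 (hmax.hasDerivAt_eq_zero (hu.hasDerivAt.sub hφ.hasDerivAt))).symm

/-- The right-hand side of the ODE `a f' + H(x, f) = lam` put in the normal form
`f' = slopeField a H lam x f`; meaningful only where `a x ≠ 0`. -/
abbrev slopeField (a : ℝ → ℝ) (H : ℝ → ℝ → ℝ) (lam x p : ℝ) : ℝ :=
  (lam - H x p) / a x

theorem slopeField_neg (a : ℝ → ℝ) (H : ℝ → ℝ → ℝ) (lam x p : ℝ) :
    slopeField a (fun x p => -H x (-p)) (-lam) x p = -slopeField a H lam x (-p) := by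
  ring

section ViscosityToClassical

variable {a u g : ℝ → ℝ} {H : ℝ → ℝ → ℝ} {lam : ℝ} {L : NNReal} {U : Set ℝ}

theorem ViscSubOn.mono {V : Set ℝ} (h : ViscSubOn a H lam V u) (hUV : U ⊆ V) :
    ViscSubOn a H lam U u :=
  fun φ hφ x hx => h φ hφ x (hUV hx)

theorem ViscSuperOn.neg (h : ViscSuperOn a H lam U u) :
    ViscSubOn a (fun x p => -H x (-p)) (-lam) U (-u) := by
  intro φ hφ x hx hmax
  have hmin : IsLocalMin (fun y => u y - (-φ) y) x := by
    simpa [add_comm, sub_eq_add_neg] using hmax.neg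
  have := h (-φ) hφ.neg x hx hmin
  simp only [deriv_neg_eq_neg_deriv, Pi.neg_apply] at this
  linarith

theorem ViscSubOn.viscDeriv2GE_of_lipschitzWith (h : ViscSubOn a H lam U u)
    (hpos : ∀ x ∈ U, 0 < a x) (hL : LipschitzWith L u)
    (hg : ∀ x ∈ U, ∀ p : ℝ, |p| ≤ L → g x ≤ slopeField a H lam x p) : ViscDeriv2GE g U u := by
  intro φ hφ x hx hmax
  refine (hg x hx _ (abs_deriv_le_of_isLocalMax_sub hL
    (hφ.differentiable two_ne_zero x) hmax)).trans ?_
  rw [div_le_iff₀' (hpos x hx)]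
  linarith [h φ hφ x hx hmax]

theorem ViscSubOn.viscDeriv2GE_of_differentiableAt (h : ViscSubOn a H lam U u)
    (hpos : ∀ x ∈ U, 0 < a x) (hu : ∀ x ∈ U, DifferentiableAt ℝ u x) :
    ViscDeriv2GE (fun x => slopeField a H lam x (deriv u x)) U u := by
  intro φ hφ x hx hmax
  rw [div_le_iff₀' (hpos x hx),
    ← deriv_eq_of_isLocalMax_sub (hu x hx) (hφ.differentiable two_ne_zero x) hmax]
  linarith [h φ hφ x hx hmax]

theorem continuousOn_uncurry_slopeField {U S : Set ℝ} (ha : ContinuousOn a U)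
    (hne : ∀ x ∈ U, a x ≠ 0) (hH : ContinuousOn (Function.uncurry H) (U ×ˢ S)) :
    ContinuousOn (Function.uncurry (slopeField a H lam)) (U ×ˢ S) :=
  (continuousOn_const.sub hH).div (ha.comp continuousOn_fst fun _ hz => hz.1)
    fun z hz => hne z.1 hz.1

theorem exists_abs_slopeField_le_of_continuousOn {k : Set ℝ} (hk : IsCompact k)
    (ha : ContinuousOn a k) (hne : ∀ x ∈ k, a x ≠ 0)
    (hH : ContinuousOn (Function.uncurry H) (k ×ˢ univ)) (lam r : ℝ) :
    ∃ M, ∀ x ∈ k, ∀ p : ℝ, |p| ≤ r → |slopeField a H lam x p| ≤ M := by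
  obtain ⟨M, hM⟩ := (hk.prod (isCompact_Icc (a := -r) (b := r))).exists_bound_of_continuousOn
    (continuousOn_uncurry_slopeField (lam := lam) ha hne
      (hH.mono (prod_mono_right (subset_univ _))))
  exact ⟨M, fun x hx p hp => hM (x, p) ⟨hx, abs_le.1 hp⟩⟩

-- Slopes of test functions are bounded by `L`, so the equation bounds `u''` from both sides.
theorem ViscSolOn.differentiableAt_and_continuousAt_deriv (h : ViscSolOn a H lam U u)
    (hU : IsOpen U) (ha : ContinuousOn a U) (hpos : ∀ x ∈ U, 0 < a x)
    (hH : ContinuousOn (Function.uncurry H) (U ×ˢ univ)) (hL : LipschitzWith L u)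
    {x : ℝ} (hx : x ∈ U) : DifferentiableAt ℝ u x ∧ ContinuousAt (deriv u) x := by
  obtain ⟨c, d, hxcd, hcd⟩ := exists_Icc_subset_of_mem hU hx
  obtain ⟨M, hM⟩ := exists_abs_slopeField_le_of_continuousOn isCompact_Icc (ha.mono hcd)
    (fun y hy => (hpos y (hcd hy)).ne') (hH.mono (prod_mono_left hcd)) lam L
  have hIoo : Ioo c d ⊆ U := Ioo_subset_Icc_self.trans hcd
  have lower : ViscDeriv2GE (fun _ => -M) (Ioo c d) u :=
    (h.1.mono hIoo).viscDeriv2GE_of_lipschitzWith (fun y hy => hpos y (hIoo hy)) hL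
      fun y hy p hp => (abs_le.1 (hM y (Ioo_subset_Icc_self hy) p hp)).1
  have upper : ViscDeriv2GE (-fun _ => M) (Ioo c d) (-u) := by
    refine (h.2.neg.mono hIoo).viscDeriv2GE_of_lipschitzWith (fun y hy => hpos y (hIoo hy)) hL.neg
      fun y hy p hp => ?_
    have := (abs_le.1 (hM y (Ioo_subset_Icc_self hy) (-p) (by rwa [abs_neg]))).2
    rw [slopeField_neg]
    exact neg_le_neg this
  have hdiff : ∀ y ∈ Ioo c d, DifferentiableAt ℝ u y := fun y hy =>
    lower.differentiableAt upper (convex_Ioo c d) hL.continuous.continuousOn continuous_const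
      continuous_const (by rwa [interior_Ioo])
  exact ⟨hdiff x hxcd, (lower.continuousOn_deriv upper (convex_Ioo c d) hdiff continuous_const
    continuous_const).continuousAt (Ioo_mem_nhds hxcd.1 hxcd.2)⟩

theorem ViscSolOn.hasDerivAt_deriv (h : ViscSolOn a H lam U u) (hU : IsOpen U)
    (ha : ContinuousOn a U) (hpos : ∀ x ∈ U, 0 < a x)
    (hH : ContinuousOn (Function.uncurry H) (U ×ˢ univ)) (hL : LipschitzWith L u)
    {x : ℝ} (hx : x ∈ U) : HasDerivAt (deriv u) (slopeField a H lam x (deriv u x)) x := by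
  have hC1 := fun y hy => h.differentiableAt_and_continuousAt_deriv hU ha hpos hH hL (x := y) hy
  have hdiff := fun y hy => (hC1 y hy).1
  have hu' : ContinuousOn (deriv u) U := fun y hy => (hC1 y hy).2.continuousWithinAt
  set g : ℝ → ℝ := fun y => slopeField a H lam y (deriv u y) with g_def
  have hg : ContinuousOn g U :=
    (continuousOn_uncurry_slopeField ha (fun y hy => (hpos y hy).ne') hH).comp
      (continuousOn_id.prodMk hu') fun y hy => ⟨hy, mem_univ _⟩
  have lower : ViscDeriv2GE g U u := h.1.viscDeriv2GE_of_differentiableAt hpos hdiff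
  have upper : ViscDeriv2GE (-g) U (-u) := by
    convert h.2.neg.viscDeriv2GE_of_differentiableAt hpos fun y hy => (hdiff y hy).neg
      using 2 with y
    simp only [g_def, deriv_neg_eq_neg_deriv, Pi.neg_apply, slopeField_neg, neg_neg]
  exact lower.hasDerivAt_deriv_of_continuousOn upper hU hdiff hg hx

end ViscosityToClassical

namespace HamClass

variable {α0 α1 γ : ℝ} {H : ℝ → ℝ → ℝ}

theorem continuous_uncurry (h : HamClass α0 α1 γ H) (hγ : 1 ≤ γ) :
    Continuous (Function.uncurry H) := by
  obtain ⟨-, -, hp, hx⟩ := h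
  refine continuous_iff_continuousAt.2 fun ⟨x, p⟩ => tendsto_iff_dist_tendsto_zero.2 ?_
  have hcont : Continuous fun z : ℝ × ℝ => α1 * (|z.2| + |p| + 1) ^ (γ - 1) * |z.2 - p| +
      α1 * (|p| ^ γ + 1) * |z.1 - x| := by
    have : Continuous fun z : ℝ × ℝ => (|z.2| + |p| + 1) ^ (γ - 1) :=
      Continuous.rpow_const (by fun_prop) fun _ => Or.inr (by linarith)
    fun_prop
  have hlim := hcont.tendsto (x, p)
  simp only [sub_self, abs_zero, mul_zero, add_zero] at hlim
  exact squeeze_zero (fun _ => dist_nonneg) (fun z => (dist_triangle _ (H z.1 p) _).trans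
    (add_le_add (hp z.1 z.2 p) (hx z.1 x p))) hlim

theorem α1_nonneg (h : HamClass α0 α1 γ H) : 0 ≤ α1 := by
  have := (abs_nonneg _).trans (h.2.2.2 0 1 0)
  rw [zero_sub, abs_neg, abs_one, mul_one] at this
  exact nonneg_of_mul_nonneg_left this (by positivity)

theorem abs_sub_le (h : HamClass α0 α1 γ H) (hγ : 1 ≤ γ) {K x p q : ℝ} (hp : |p| ≤ K)
    (hq : |q| ≤ K) : |H x p - H x q| ≤ α1 * (2 * K + 1) ^ (γ - 1) * |p - q| := by
  have := h.α1_nonneg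
  refine (h.2.2.1 x p q).trans ?_
  have : |p| + |q| + 1 ≤ 2 * K + 1 := by linarith
  gcongr

end HamClass

/-- The constant `K_λ`: it is chosen so that `H x p > lam` as soon as `|p| ≥ K_λ`. -/
def gradientBound (α0 lam : ℝ) : ℝ :=
  1 + (|lam| + 1 / α0) / α0

theorem gradientBound_nonneg {α0 lam : ℝ} (hα0 : 0 ≤ α0) : 0 ≤ gradientBound α0 lam := by
  unfold gradientBound
  positivity

theorem HamClass.lt_of_gradientBound_le_abs {α0 α1 γ lam x p : ℝ} {H : ℝ → ℝ → ℝ}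
    (h : HamClass α0 α1 γ H) (hα0 : 0 < α0) (hγ : 1 ≤ γ) (hp : gradientBound α0 lam ≤ |p|) :
    lam < H x p := by
  have one_le : 1 ≤ |p| := le_trans (le_add_of_nonneg_right (by positivity)) hp
  calc lam ≤ |lam| := le_abs_self lam
    _ < α0 + |lam| := lt_add_of_pos_left _ hα0
    _ = α0 * gradientBound α0 lam - 1 / α0 := by rw [gradientBound]; field_simp; ring
    _ ≤ α0 * |p| - 1 / α0 := by gcongr
    _ ≤ α0 * |p| ^ γ - 1 / α0 := by gcongr; exact self_le_rpow_of_one_le one_le hγ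
    _ ≤ H x p := h.1 x p

section DegenerateGradientBound

variable {a v v' : ℝ → ℝ} {κ : NNReal} {b δ K L x : ℝ}

theorem pos_and_le_of_lipschitzWith_sqrt (hκ : LipschitzWith κ fun x => √(a x)) (hx : 0 < a x)
    {t : ℝ} (ht : |t - x| ≤ √(a x) / (2 * (κ + 1))) : 0 < a t ∧ a t ≤ 9 / 4 * a x := by
  have hs : 0 < √(a x) := Real.sqrt_pos.2 hx
  have hdist : |√(a t) - √(a x)| ≤ √(a x) / 2 := calc
    |√(a t) - √(a x)| ≤ κ * |t - x| := hκ.dist_le_mul t x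
    _ ≤ (κ + 1) * (√(a x) / (2 * (κ + 1))) := by gcongr; simp
    _ = √(a x) / 2 := by field_simp
  obtain ⟨hlow, hhigh⟩ := abs_le.1 hdist
  have hpos : 0 < a t := Real.sqrt_pos.1 (by linarith)
  refine ⟨hpos, ?_⟩
  rw [← Real.sq_sqrt hpos.le, ← Real.sq_sqrt hx.le]
  nlinarith [Real.sqrt_nonneg (a t)]

theorem le_of_forall_deriv_lt_neg_div {ρ c N : ℝ} (hρ : 0 < ρ) (hc : 0 ≤ c)
    (hv : ∀ t ∈ Icc (x - ρ) x, HasDerivAt v (v' t) t) (hstart : v (x - ρ) ≤ N + c)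
    (hdecay : ∀ t ∈ Icc (x - ρ) x, N ≤ v t → v' t < -(c / ρ)) : v x ≤ N := by
  have hfence : v x ≤ N + c / ρ * (x - x) := by
    refine image_le_of_deriv_right_lt_deriv_boundary (f := v) (f' := v')
      (B := fun t => N + c / ρ * (x - t)) (B' := fun _ => -(c / ρ))
      (fun t ht => (hv t ht).continuousAt.continuousWithinAt)
      (fun t ht => (hv t (Ico_subset_Icc_self ht)).hasDerivWithinAt) ?_ (fun t => ?_)
      (fun t ht hcontact => ?_) (right_mem_Icc.2 (sub_le_self x hρ.le))
    · rwa [sub_sub_cancel, div_mul_cancel₀ c hρ.ne']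
    · exact ((((hasDerivAt_id t).const_sub x).const_mul (c / ρ)).const_add _).congr_deriv (by ring)
    · refine hdecay t (Ico_subset_Icc_self ht) (hcontact ▸ le_add_of_nonneg_right ?_)
      exact mul_nonneg (by positivity) (sub_nonneg.2 ht.2.le)
  simpa only [sub_self, mul_zero, add_zero] using hfence

-- Where `v ≥ K` it decays at rate `δ / a`, and `a` is comparable to `a x` on an interval of length
-- of order `√(a x)` to the left of `x`: across it `v` loses an amount of order `δ / √(a x)`.
theorem exists_pos_forall_le_max_sub (hκ : LipschitzWith κ fun x => √(a x)) (hb : ∀ x, a x ≤ b)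
    (hδ : 0 < δ) (hv : ∀ x, 0 < a x → HasDerivAt v (v' x) x)
    (hdecay : ∀ x, 0 < a x → K ≤ v x → a x * v' x ≤ -δ) :
    ∃ c > 0, ∀ M, (∀ x, 0 < a x → v x ≤ M) → ∀ x, 0 < a x → v x ≤ max K (M - c) := by
  refine ⟨δ / (5 * (κ + 1) * (√b + 1)), by positivity, fun M hM x hx => ?_⟩
  set c := δ / (5 * (κ + 1) * (√b + 1)) with c_def
  set ρ := √(a x) / (2 * (κ + 1)) with ρ_def
  have hρ : 0 < ρ := by positivity
  have hnear : ∀ t ∈ Icc (x - ρ) x, 0 < a t ∧ a t ≤ 9 / 4 * a x := fun t ht =>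
    pos_and_le_of_lipschitzWith_sqrt hκ hx (by
      rw [abs_sub_comm, abs_of_nonneg] <;> linarith [ht.1, ht.2])
  have hsteep : c / ρ * (9 / 4 * a x) < δ := by
    have hsb : √(a x) < √b + 1 := (Real.sqrt_le_sqrt (hb x)).trans_lt (lt_add_one _)
    calc c / ρ * (9 / 4 * a x) = c / ρ * (9 / 4 * √(a x) ^ 2) := by rw [Real.sq_sqrt hx.le]
      _ = δ * (9 / 10 * (√(a x) / (√b + 1))) := by rw [c_def, ρ_def]; field_simp; ring
      _ < δ * 1 := by
        gcongr
        linarith [(div_lt_one (by positivity)).2 hsb]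
      _ = δ := mul_one δ
  have hstart : v (x - ρ) ≤ max K (M - c) + c := by
    linarith [le_max_right K (M - c), hM _ (hnear _ (left_mem_Icc.2 (sub_le_self x hρ.le))).1]
  refine le_of_forall_deriv_lt_neg_div hρ (by positivity) (fun t ht => hv t (hnear t ht).1) hstart
    fun t ht hle => lt_of_mul_lt_mul_left (a := a t) ?_ (hnear t ht).1.le
  calc a t * v' t ≤ -δ := hdecay t (hnear t ht).1 ((le_max_left _ _).trans hle)
    _ < -(c / ρ * (9 / 4 * a x)) := neg_lt_neg hsteep
    _ ≤ -(c / ρ * a t) := neg_le_neg (by gcongr; exact (hnear t ht).2)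
    _ = a t * -(c / ρ) := by ring

theorem le_of_forall_mul_deriv_le (hκ : LipschitzWith κ fun x => √(a x)) (hb : ∀ x, a x ≤ b)
    (hδ : 0 < δ) (hv : ∀ x, 0 < a x → HasDerivAt v (v' x) x)
    (hdecay : ∀ x, 0 < a x → K ≤ v x → a x * v' x ≤ -δ) (hL : ∀ x, 0 < a x → v x ≤ L)
    (hx : 0 < a x) : v x ≤ K := by
  obtain ⟨c, hc, hstep⟩ := exists_pos_forall_le_max_sub hκ hb hδ hv hdecay
  set V := v '' {y | 0 < a y}
  have hbdd : BddAbove V := ⟨L, forall_mem_image.2 hL⟩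
  have hsup := hstep (sSup V) fun y hy => le_csSup hbdd (mem_image_of_mem v hy)
  have : sSup V ≤ max K (sSup V - c) :=
    csSup_le ⟨v x, mem_image_of_mem v hx⟩ (forall_mem_image.2 hsup)
  exact (le_csSup hbdd (mem_image_of_mem v hx)).trans
    ((le_max_iff.1 this).resolve_right (by linarith))

theorem abs_le_of_forall_mul_deriv_le (hκ : LipschitzWith κ fun x => √(a x)) (hb : ∀ x, a x ≤ b)
    (hδ : 0 < δ) (hv : ∀ x, 0 < a x → HasDerivAt v (v' x) x)
    (hdecay : ∀ x, 0 < a x → K ≤ |v x| → a x * v' x ≤ -δ) (hL : ∀ x, 0 < a x → |v x| ≤ L)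
    (hx : 0 < a x) : |v x| ≤ K := by
  refine abs_le'.2 ⟨?_, ?_⟩
  · exact le_of_forall_mul_deriv_le hκ hb hδ hv
      (fun y hy hK => hdecay y hy (hK.trans (le_abs_self _)))
      (fun y hy => (le_abs_self _).trans (hL y hy)) hx
  -- The reflection `y ↦ -v (-y)` satisfies the same differential inequality.
  · have hκ' : LipschitzWith κ fun y => √(a (-y)) := by
      rw [← mul_one κ]
      exact hκ.comp LipschitzWith.id.neg
    have hv' : ∀ y, 0 < a (-y) → HasDerivAt (fun z => -v (-z)) (v' (-y)) y := fun y hy => by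
      simpa using! ((hv (-y) hy).scomp y (hasDerivAt_neg y)).neg
    simpa using le_of_forall_mul_deriv_le (x := -x) hκ' (fun y => hb (-y)) hδ hv'
      (fun y hy hK => hdecay (-y) hy (hK.trans (neg_le_abs _)))
      (fun y hy => (neg_le_abs _).trans (hL (-y) hy)) (by rwa [neg_neg])

end DegenerateGradientBound

section IntegralCurveLimit

variable {E ι : Type*} [NormedAddCommGroup E] [NormedSpace ℝ E]

theorem norm_sub_sub_smul_le_of_isIntegralCurveOn {F : ℝ → E → E} {φ : ℝ → E} {s : Set ℝ}
    {x y ε : ℝ} {e : E} (hφ : IsIntegralCurveOn φ F s) (hs : Convex ℝ s)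
    (hF : ∀ t ∈ s, ‖F t (φ t) - e‖ ≤ ε) (hx : x ∈ s) (hy : y ∈ s) :
    ‖φ y - φ x - (y - x) • e‖ ≤ ε * ‖y - x‖ := by
  have := Convex.norm_image_sub_le_of_norm_hasDerivWithin_le (f := fun t => φ t - t • e)
    (fun t ht => (hφ t ht).sub ((hasDerivWithinAt_id t s).smul_const e)) (by simpa using hF)
    hs hx hy
  rwa [sub_sub_sub_comm, ← sub_smul] at this

variable {l : Filter ι} {F : ℝ → E → E} {φ : ι → ℝ → E} {f : ℝ → E} {s : Set ℝ}
  {Z : Set (ℝ × E)} {B : ℝ}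

theorem exists_ball_eventually_norm_sub_le {x ε : ℝ} (hs : Convex ℝ s)
    (hF : ContinuousOn (Function.uncurry F) Z) (hB : ∀ z ∈ Z, ‖F z.1 z.2‖ ≤ B)
    (hφ : ∀ᶠ i in l, IsIntegralCurveOn (φ i) F s) (hφZ : ∀ᶠ i in l, ∀ t ∈ s, (t, φ i t) ∈ Z)
    (hx : x ∈ s) (hfx : (x, f x) ∈ Z) (hlim : Tendsto (φ · x) l (𝓝 (f x))) (hε : 0 < ε) :
    ∃ ρ > 0, ∀ᶠ i in l, ∀ t ∈ s ∩ Metric.ball x ρ, ‖F t (φ i t) - F x (f x)‖ ≤ ε := by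
  have hB0 : 0 ≤ B := (norm_nonneg _).trans (hB _ hfx)
  obtain ⟨r, hr, hFr⟩ := Metric.continuousOn_iff.1 hF (x, f x) hfx ε hε
  have hBr : (B + 1) * (r / (2 * (B + 1))) = r / 2 := by field_simp
  refine ⟨r / (2 * (B + 1)), by positivity, ?_⟩
  filter_upwards [hφ, hφZ, hlim.eventually (Metric.ball_mem_nhds (f x) (half_pos hr))]
    with i hi hiZ hix t ⟨hts, htx⟩
  rw [Metric.mem_ball] at htx
  have hmove : dist (φ i t) (φ i x) ≤ B * dist t x := by
    rw [dist_eq_norm, dist_eq_norm]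
    exact Convex.norm_image_sub_le_of_norm_hasDerivWithin_le hi (fun t ht => hB _ (hiZ t ht))
      hs hx hts
  have hsmall : B * dist t x ≤ r / 2 :=
    hBr ▸ mul_le_mul (by linarith) htx.le dist_nonneg (by linarith)
  have hdist : dist (t, φ i t) (x, f x) < r := by
    refine max_lt (htx.trans (div_lt_self hr (by linarith))) ?_
    calc dist (φ i t) (f x) ≤ dist (φ i t) (φ i x) + dist (φ i x) (f x) := dist_triangle _ _ _
      _ < r / 2 + r / 2 := add_lt_add_of_le_of_lt (hmove.trans hsmall) hix
      _ = r := add_halves r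
  exact dist_eq_norm (F t (φ i t)) (F x (f x)) ▸ (hFr _ (hiZ t hts) hdist).le

theorem isIntegralCurveOn_of_tendsto [l.NeBot] (hs : Convex ℝ s)
    (hF : ContinuousOn (Function.uncurry F) Z) (hB : ∀ z ∈ Z, ‖F z.1 z.2‖ ≤ B)
    (hφ : ∀ᶠ i in l, IsIntegralCurveOn (φ i) F s) (hφZ : ∀ᶠ i in l, ∀ t ∈ s, (t, φ i t) ∈ Z)
    (hfZ : ∀ t ∈ s, (t, f t) ∈ Z) (hlim : ∀ t ∈ s, Tendsto (φ · t) l (𝓝 (f t))) :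
    IsIntegralCurveOn f F s := by
  intro x hx
  rw [hasDerivWithinAt_iff_isLittleO, Asymptotics.isLittleO_iff]
  intro ε hε
  obtain ⟨ρ, hρ, hnear⟩ :=
    exists_ball_eventually_norm_sub_le hs hF hB hφ hφZ hx (hfZ x hx) (hlim x hx) hε
  refine eventually_of_mem (inter_mem_nhdsWithin s (Metric.ball_mem_nhds x hρ)) fun y hy => ?_
  refine le_of_tendsto (((hlim y hy.1).sub (hlim x hx)).sub_const _).norm ?_
  filter_upwards [hφ, hnear] with i hi hiF
  exact norm_sub_sub_smul_le_of_isIntegralCurveOn (hi.mono inter_subset_left)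
    (hs.inter (convex_ball x ρ)) hiF ⟨hx, Metric.mem_ball_self hρ⟩ hy

end IntegralCurveLimit

theorem exists_forall_mem_of_forall_isPreconnected {X Y : Type*} [TopologicalSpace X]
    [LocallyConnectedSpace X] [Nonempty Y] {A : Set X} {P : (X → Y) → X → Prop} (hA : IsOpen A)
    (hP : ∀ f g x, f =ᶠ[𝓝 x] g → P g x → P f x)
    (h : ∀ I ⊆ A, IsOpen I → IsPreconnected I → ∃ g, ∀ x ∈ I, P g x) :
    ∃ f, ∀ x ∈ A, P f x := by
  choose! g hg using h
  refine ⟨fun x => g (connectedComponentIn A x) x, fun x hx => hP _ (g (connectedComponentIn A x))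
    x ?_ (hg _ (connectedComponentIn_subset _ _) hA.connectedComponentIn
      isPreconnected_connectedComponentIn x (mem_connectedComponentIn hx))⟩
  filter_upwards [hA.connectedComponentIn.mem_nhds (mem_connectedComponentIn hx)] with y hy
  rw [connectedComponentIn_eq hy]

/-- `v` is a strict subsolution of `y' = F t y` on `s`, i.e. a barrier which solutions can only
cross upwards. -/
def StrictSubsolOn (F : ℝ → ℝ → ℝ) (s : Set ℝ) (v : ℝ → ℝ) : Prop :=
  ∀ t ∈ s, DifferentiableAt ℝ v t ∧ deriv v t < F t (v t)

/-- `w` is a strict supersolution of `y' = F t y` on `s`, i.e. a barrier which solutions can only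
cross downwards. -/
def StrictSupersolOn (F : ℝ → ℝ → ℝ) (s : Set ℝ) (w : ℝ → ℝ) : Prop :=
  ∀ t ∈ s, DifferentiableAt ℝ w t ∧ F t (w t) < deriv w t

section Barriers

variable {F : ℝ → ℝ → ℝ} {f v w : ℝ → ℝ} {s : Set ℝ} {c d m M t : ℝ}

theorem StrictSubsolOn.mono {s' : Set ℝ} (hv : StrictSubsolOn F s v) (hs : s' ⊆ s) :
    StrictSubsolOn F s' v :=
  fun t ht => hv t (hs ht)

theorem StrictSupersolOn.mono {s' : Set ℝ} (hw : StrictSupersolOn F s w) (hs : s' ⊆ s) :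
    StrictSupersolOn F s' w :=
  fun t ht => hw t (hs ht)

theorem StrictSubsolOn.lt_of_eventually_le (hv : StrictSubsolOn F s v) (ht : t ∈ s)
    (hf : HasDerivAt f (F t (f t)) t) (hle : ∀ᶠ r in 𝓝 t, v r ≤ f r) : v t < f t := by
  refine hle.self_of_nhds.lt_of_ne fun heq => ?_
  have hmin : IsLocalMin (fun r => f r - v r) t := by
    filter_upwards [hle] with r hr
    rw [heq, sub_self]
    exact sub_nonneg.2 hr
  have := hmin.hasDerivAt_eq_zero (hf.sub (hv t ht).1.hasDerivAt)
  linarith [heq ▸ (hv t ht).2]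

theorem StrictSupersolOn.lt_of_eventually_le (hw : StrictSupersolOn F s w) (ht : t ∈ s)
    (hf : HasDerivAt f (F t (f t)) t) (hle : ∀ᶠ r in 𝓝 t, f r ≤ w r) : f t < w t := by
  refine hle.self_of_nhds.lt_of_ne fun heq => ?_
  have hmax : IsLocalMax (fun r => f r - w r) t := by
    filter_upwards [hle] with r hr
    rw [heq, sub_self]
    exact sub_nonpos.2 hr
  have := hmax.hasDerivAt_eq_zero (hf.sub (hw t ht).1.hasDerivAt)
  linarith [heq ▸ (hw t ht).2]

theorem StrictSubsolOn.le_of_isIntegralCurveOn (hv : StrictSubsolOn F (Icc c d) v)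
    {G : ℝ → ℝ → ℝ} (hf : IsIntegralCurveOn f G (Icc c d))
    (hG : ∀ t ∈ Icc c d, G t (v t) = F t (v t)) (hc : v c ≤ f c) (ht : t ∈ Icc c d) :
    v t ≤ f t := by
  refine image_le_of_deriv_right_lt_deriv_boundary' (f' := deriv v) (B' := fun r => G r (f r))
    (fun r hr => (hv r hr).1.continuousAt.continuousWithinAt)
    (fun r hr => (hv r (Ico_subset_Icc_self hr)).1.hasDerivAt.hasDerivWithinAt) hc
    hf.continuousOn (fun r hr => (hf r (Ico_subset_Icc_self hr)).mono_of_mem_nhdsWithin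
      (Icc_mem_nhdsGE_of_mem hr)) (fun r hr heq => ?_) ht
  rw [← heq, hG r (Ico_subset_Icc_self hr)]
  exact (hv r (Ico_subset_Icc_self hr)).2

theorem StrictSupersolOn.le_of_isIntegralCurveOn (hw : StrictSupersolOn F (Icc c d) w)
    {G : ℝ → ℝ → ℝ} (hf : IsIntegralCurveOn f G (Icc c d))
    (hG : ∀ t ∈ Icc c d, G t (w t) = F t (w t)) (hc : f c ≤ w c) (ht : t ∈ Icc c d) :
    f t ≤ w t := by
  refine image_le_of_deriv_right_lt_deriv_boundary' (f' := fun r => G r (f r)) (B' := deriv w)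
    hf.continuousOn (fun r hr => (hf r (Ico_subset_Icc_self hr)).mono_of_mem_nhdsWithin
      (Icc_mem_nhdsGE_of_mem hr)) hc
    (fun r hr => (hw r hr).1.continuousAt.continuousWithinAt)
    (fun r hr => (hw r (Ico_subset_Icc_self hr)).1.hasDerivAt.hasDerivWithinAt)
    (fun r hr heq => ?_) ht
  rw [heq, hG r (Ico_subset_Icc_self hr)]
  exact (hw r (Ico_subset_Icc_self hr)).2

theorem exists_isIntegralCurveOn_projIcc {C : NNReal} (hcd : c ≤ d) (hmM : m ≤ M)
    (hF : ContinuousOn (Function.uncurry F) (Icc c d ×ˢ Icc m M))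
    (hlip : ∀ t ∈ Icc c d, LipschitzOnWith C (F t) (Icc m M)) (y₀ : ℝ) :
    ∃ f, f c = y₀ ∧ IsIntegralCurveOn f (fun t y => F t (projIcc m M hmM y)) (Icc c d) := by
  obtain ⟨B, hB⟩ := (isCompact_Icc.prod isCompact_Icc).exists_bound_of_continuousOn hF
  have hPL : IsPicardLindelof (fun t y => F t (projIcc m M hmM y))
      (⟨c, left_mem_Icc.2 hcd⟩ : Icc c d) y₀ (B.toNNReal * (d - c).toNNReal) 0 B.toNNReal C := by
    refine ⟨fun t ht => ?_, fun y _ => ?_, fun t ht y _ => ?_, ?_⟩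
    · have hproj : LipschitzWith 1 fun y => (projIcc m M hmM y : ℝ) :=
        LipschitzWith.projIcc hmM
      rw [← mul_one C]
      exact (hlip t ht).comp hproj.lipschitzOnWith fun y _ => (projIcc m M hmM y).2
    · exact hF.comp (continuousOn_id.prodMk continuousOn_const) fun t ht =>
        ⟨ht, (projIcc m M hmM y).2⟩
    · exact (hB (t, projIcc m M hmM y) ⟨ht, (projIcc m M hmM y).2⟩).trans (Real.le_coe_toNNReal B)
    · simp [hcd]
  exact hPL.exists_eq_forall_mem_Icc_hasDerivWithinAt₀

theorem exists_isIntegralCurveOn_Icc_between {C : NNReal} (hcd : c ≤ d)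
    (hF : ContinuousOn (Function.uncurry F) (Icc c d ×ˢ Icc m M))
    (hlip : ∀ t ∈ Icc c d, LipschitzOnWith C (F t) (Icc m M)) (hv : StrictSubsolOn F (Icc c d) v)
    (hw : StrictSupersolOn F (Icc c d) w) (hvm : MapsTo v (Icc c d) (Icc m M))
    (hwm : MapsTo w (Icc c d) (Icc m M)) (hvw : v c ≤ w c) :
    ∃ f, IsIntegralCurveOn f F (Icc c d) ∧ ∀ t ∈ Icc c d, f t ∈ Icc (v t) (w t) := by
  have hc := left_mem_Icc.2 hcd
  have hmM : m ≤ M := (hvm hc).1.trans (hvm hc).2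
  have hproj : ∀ y ∈ Icc m M, (projIcc m M hmM y : ℝ) = y := fun y hy => by
    rw [projIcc_of_mem hmM hy]
  obtain ⟨f, hfc, hf⟩ := exists_isIntegralCurveOn_projIcc hcd hmM hF hlip (w c)
  have hbetween : ∀ t ∈ Icc c d, f t ∈ Icc (v t) (w t) := fun t ht =>
    ⟨hv.le_of_isIntegralCurveOn hf (fun r hr => by rw [hproj _ (hvm hr)]) (hfc ▸ hvw) ht,
      hw.le_of_isIntegralCurveOn hf (fun r hr => by rw [hproj _ (hwm hr)]) hfc.le ht⟩
  refine ⟨f, fun t ht => ?_, hbetween⟩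
  rw [← hproj (f t) ⟨(hvm ht).1.trans (hbetween t ht).1, (hbetween t ht).2.trans (hwm ht).2⟩]
  exact hf t ht

theorem exists_forall_tendsto_of_eventually_mem_isCompact {ι X Y : Type*} [TopologicalSpace Y]
    [Nonempty Y] {U : Ultrafilter ι} {φ : ι → X → Y} {s : Set X} {K : X → Set Y}
    (hK : ∀ x ∈ s, IsCompact (K x)) (hφ : ∀ x ∈ s, ∀ᶠ i in U, φ i x ∈ K x) :
    ∃ f : X → Y, ∀ x ∈ s, f x ∈ K x ∧ Tendsto (φ · x) U (𝓝 (f x)) := by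
  have hlim : ∀ x ∈ s, ∃ y, y ∈ K x ∧ Tendsto (φ · x) U (𝓝 y) := fun x hx =>
    (hK x hx).ultrafilter_le_nhds' (U.map (φ · x)) (hφ x hx)
  choose! f hf using hlim
  exact ⟨f, hf⟩

theorem exists_ultrafilter_isIntegralCurveOn_between {I : Set ℝ} (hI : I.Nonempty)
    (hconn : I.OrdConnected) (hF : ContinuousOn (Function.uncurry F) (I ×ˢ Icc m M))
    (hlip : ∀ k ⊆ I, IsCompact k → ∃ C : NNReal, ∀ t ∈ k, LipschitzOnWith C (F t) (Icc m M))
    (hv : StrictSubsolOn F I v) (hw : StrictSupersolOn F I w) (hvm : MapsTo v I (Icc m M))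
    (hwm : MapsTo w I (Icc m M)) (hvw : ∀ t ∈ I, v t ≤ w t) :
    ∃ (U : Ultrafilter (I × I)) (φ : I × I → ℝ → ℝ), ∀ c ∈ I, ∀ d ∈ I, ∀ᶠ p in U,
      IsIntegralCurveOn (φ p) F (Icc c d) ∧ ∀ t ∈ Icc c d, φ p t ∈ Icc (v t) (w t) := by
  have : Nonempty I := hI.to_subtype
  have hsol : ∀ p : I × I, ∃ φ, IsIntegralCurveOn φ F (Icc (p.1 : ℝ) p.2) ∧
      ∀ t ∈ Icc (p.1 : ℝ) p.2, φ t ∈ Icc (v t) (w t) := by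
    intro p
    have hsub : Icc (p.1 : ℝ) p.2 ⊆ I := hconn.out p.1.2 p.2.2
    rcases le_or_gt (p.1 : ℝ) p.2 with hle | hlt
    · obtain ⟨C, hC⟩ := hlip _ hsub isCompact_Icc
      exact exists_isIntegralCurveOn_Icc_between hle (hF.mono (prod_mono_left hsub)) hC
        (hv.mono hsub) (hw.mono hsub) (hvm.mono_left hsub) (hwm.mono_left hsub) (hvw _ p.1.2)
    · exact ⟨v, by simp [IsIntegralCurveOn, Icc_eq_empty_of_lt hlt]⟩
  choose φ hφ hφvw using hsol
  refine ⟨Ultrafilter.of (atBot ×ˢ atTop), φ, fun c hc d hd => Ultrafilter.of_le _ ?_⟩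
  filter_upwards [(eventually_le_atBot (⟨c, hc⟩ : I)).prod_mk (eventually_ge_atTop (⟨d, hd⟩ : I))]
    with p hp
  have hcd : Icc c d ⊆ Icc (p.1 : ℝ) p.2 := Icc_subset_Icc hp.1 hp.2
  exact ⟨(hφ p).mono hcd, fun t ht => hφvw p t (hcd ht)⟩

theorem exists_hasDerivAt_between_of_isPreconnected {I : Set ℝ} (hI : IsOpen I)
    (hconn : IsPreconnected I) (hF : ContinuousOn (Function.uncurry F) (I ×ˢ Icc m M))
    (hlip : ∀ k ⊆ I, IsCompact k → ∃ C : NNReal, ∀ t ∈ k, LipschitzOnWith C (F t) (Icc m M))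
    (hv : StrictSubsolOn F I v) (hw : StrictSupersolOn F I w) (hvm : MapsTo v I (Icc m M))
    (hwm : MapsTo w I (Icc m M)) (hvw : ∀ t ∈ I, v t ≤ w t) :
    ∃ f, ∀ t ∈ I, HasDerivAt f (F t (f t)) t ∧ f t ∈ Icc (v t) (w t) := by
  rcases I.eq_empty_or_nonempty with rfl | hne
  · simp
  obtain ⟨U, φ, hφ⟩ := exists_ultrafilter_isIntegralCurveOn_between hne hconn.ordConnected hF
    hlip hv hw hvm hwm hvw
  obtain ⟨f, hf⟩ := exists_forall_tendsto_of_eventually_mem_isCompact (U := U) (φ := φ) (s := I)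
    (K := fun t => Icc (v t) (w t)) (fun _ _ => isCompact_Icc) fun t ht =>
      (hφ t ht t ht).mono fun p hp => hp.2 t ⟨le_rfl, le_rfl⟩
  refine ⟨f, fun t ht => ⟨?_, (hf t ht).1⟩⟩
  obtain ⟨c, d, htcd, hcd⟩ := exists_Icc_subset_of_mem hI ht
  have hle : c ≤ d := (htcd.1.trans htcd.2).le
  have hφcd := hφ c (hcd (left_mem_Icc.2 hle)) d (hcd (right_mem_Icc.2 hle))
  have hFcd := hF.mono (prod_mono_left hcd)
  obtain ⟨B, hB⟩ := (isCompact_Icc.prod isCompact_Icc).exists_bound_of_continuousOn hFcd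
  have hmem : ∀ {r y}, r ∈ Icc c d → y ∈ Icc (v r) (w r) → (r, y) ∈ Icc c d ×ˢ Icc m M :=
    fun hr hy => ⟨hr, Icc_subset_Icc (hvm (hcd hr)).1 (hwm (hcd hr)).2 hy⟩
  have hcurve : IsIntegralCurveOn f F (Icc c d) :=
    isIntegralCurveOn_of_tendsto (convex_Icc c d) hFcd hB (hφcd.mono fun p hp => hp.1)
      (hφcd.mono fun p hp r hr => hmem hr (hp.2 r hr))
      (fun r hr => hmem hr (hf r (hcd hr)).1) fun r hr => (hf r (hcd hr)).2
  exact (hcurve t (Ioo_subset_Icc_self htcd)).hasDerivAt (Icc_mem_nhds htcd.1 htcd.2)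

theorem exists_hasDerivAt_between {A : Set ℝ} (hA : IsOpen A)
    (hF : ContinuousOn (Function.uncurry F) (A ×ˢ Icc m M))
    (hlip : ∀ k ⊆ A, IsCompact k → ∃ C : NNReal, ∀ t ∈ k, LipschitzOnWith C (F t) (Icc m M))
    (hv : StrictSubsolOn F A v) (hw : StrictSupersolOn F A w) (hvm : MapsTo v A (Icc m M))
    (hwm : MapsTo w A (Icc m M)) (hvw : ∀ t ∈ A, v t ≤ w t) :
    ∃ f, ∀ t ∈ A, HasDerivAt f (F t (f t)) t ∧ f t ∈ Ioo (v t) (w t) := by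
  obtain ⟨f, hf⟩ := exists_forall_mem_of_forall_isPreconnected
    (P := fun f t => HasDerivAt f (F t (f t)) t ∧ f t ∈ Icc (v t) (w t)) hA
    (fun f g t hfg ⟨hg, hgt⟩ => by
      rw [hfg.eq_of_nhds]
      exact ⟨hg.congr_of_eventuallyEq hfg, hgt⟩)
    fun I hIA hI hconn => exists_hasDerivAt_between_of_isPreconnected hI hconn
      (hF.mono (prod_mono_left hIA)) (fun k hk => hlip k (hk.trans hIA)) (hv.mono hIA)
      (hw.mono hIA) (hvm.mono_left hIA) (hwm.mono_left hIA) fun t ht => hvw t (hIA ht)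
  have hnear : ∀ t ∈ A, ∀ᶠ r in 𝓝 t, r ∈ A := fun t ht => hA.mem_nhds ht
  exact ⟨f, fun t ht => ⟨(hf t ht).1,
    hv.lt_of_eventually_le ht (hf t ht).1 ((hnear t ht).mono fun r hr => (hf r hr).2.1),
    hw.lt_of_eventually_le ht (hf t ht).1 ((hnear t ht).mono fun r hr => (hf r hr).2.2)⟩⟩

theorem StrictSupersolOn.comp_neg (hw : StrictSupersolOn F s w) :
    StrictSubsolOn (fun t y => -F (-t) y) (-s) fun t => w (-t) := fun t ht => by
  refine ⟨differentiableAt_comp_neg.2 (hw _ ht).1, ?_⟩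
  rw [deriv_comp_neg]
  exact neg_lt_neg (hw _ ht).2

theorem StrictSubsolOn.comp_neg (hv : StrictSubsolOn F s v) :
    StrictSupersolOn (fun t y => -F (-t) y) (-s) fun t => v (-t) := fun t ht => by
  refine ⟨differentiableAt_comp_neg.2 (hv _ ht).1, ?_⟩
  rw [deriv_comp_neg]
  exact neg_lt_neg (hv _ ht).2

-- Reversing time exchanges strict subsolutions and strict supersolutions.
theorem exists_hasDerivAt_between_of_strictSupersolOn {A : Set ℝ} (hA : IsOpen A)
    (hF : ContinuousOn (Function.uncurry F) (A ×ˢ Icc m M))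
    (hlip : ∀ k ⊆ A, IsCompact k → ∃ C : NNReal, ∀ t ∈ k, LipschitzOnWith C (F t) (Icc m M))
    (hv : StrictSupersolOn F A v) (hw : StrictSubsolOn F A w) (hvm : MapsTo v A (Icc m M))
    (hwm : MapsTo w A (Icc m M)) (hvw : ∀ t ∈ A, v t ≤ w t) :
    ∃ f, ∀ t ∈ A, HasDerivAt f (F t (f t)) t ∧ f t ∈ Ioo (v t) (w t) := by
  have hFneg : ContinuousOn (Function.uncurry fun t y => -F (-t) y) ((-A) ×ˢ Icc m M) :=
    (hF.comp (by fun_prop : Continuous fun z : ℝ × ℝ => (-z.1, z.2)).continuousOn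
      fun z hz => hz).neg
  obtain ⟨g, hg⟩ := exists_hasDerivAt_between hA.neg hFneg
    (fun k hk hkc => by
      obtain ⟨C, hC⟩ := hlip (-k) (neg_subset.2 hk) hkc.neg
      exact ⟨C, fun t ht => (hC (-t) (neg_mem_neg.2 ht)).neg⟩)
    hv.comp_neg hw.comp_neg (fun t ht => hvm ht) (fun t ht => hwm ht) fun t ht => hvw (-t) ht
  refine ⟨fun t => g (-t), fun t ht => ?_⟩
  obtain ⟨hderiv, hbetween⟩ := hg (-t) (neg_mem_neg.2 ht)
  simp only [neg_neg] at hderiv hbetween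
  exact ⟨by simpa [Function.comp_def] using hderiv.comp t (hasDerivAt_neg t), hbetween⟩

end Barriers

section ClassicalSolution

variable {a : ℝ → ℝ} {H : ℝ → ℝ → ℝ} {f u : ℝ → ℝ} {κ L : NNReal} {b α0 α1 γ lam0 lam : ℝ}

theorem ViscSolOn.mono {U V : Set ℝ} (h : ViscSolOn a H lam V u) (hUV : U ⊆ V) :
    ViscSolOn a H lam U u :=
  ⟨h.1.mono hUV, fun φ hφ x hx => h.2 φ hφ x (hUV hx)⟩

theorem isOpen_setOf_pos_of_continuous_sqrt (hsqrt : Continuous fun x => √(a x)) :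
    IsOpen {x | 0 < a x} := by
  simpa only [Real.sqrt_pos] using isOpen_lt (continuous_const (y := (0 : ℝ))) hsqrt

theorem continuousOn_setOf_pos_of_continuous_sqrt (hsqrt : Continuous fun x => √(a x)) :
    ContinuousOn a {x | 0 < a x} :=
  (hsqrt.pow 2).continuousOn.congr fun _ hx => (Real.sq_sqrt (le_of_lt hx)).symm

theorem contDiffOn_one_of_hasDerivAt {U : Set ℝ} {F : ℝ → ℝ → ℝ} {S : Set ℝ} (hU : IsOpen U)
    (hF : ContinuousOn (Function.uncurry F) (U ×ˢ S)) (hfS : MapsTo f U S)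
    (hf : ∀ x ∈ U, HasDerivAt f (F x (f x)) x) : ContDiffOn ℝ 1 f U := by
  have hcont : ContinuousOn f U := fun x hx => (hf x hx).continuousAt.continuousWithinAt
  rw [show (1 : WithTop ℕ∞) = 0 + 1 from rfl, contDiffOn_succ_iff_deriv_of_isOpen hU]
  exact ⟨fun x hx => (hf x hx).differentiableAt.differentiableWithinAt, by simp,
    contDiffOn_zero.2 <| (hF.comp (continuousOn_id.prodMk hcont) fun x hx => ⟨hx, hfS hx⟩).congr
      fun x hx => (hf x hx).deriv⟩

theorem mul_deriv_add_eq_of_hasDerivAt {x : ℝ} (hx : a x ≠ 0)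
    (hf : HasDerivAt f (slopeField a H lam x (f x)) x) : a x * deriv f x + H x (f x) = lam := by
  rw [hf.deriv, mul_div_cancel₀ _ hx, sub_add_cancel]

theorem HamClass.exists_lipschitzOnWith_slopeField (hH : HamClass α0 α1 γ H) (hγ : 1 ≤ γ)
    {k : Set ℝ} {K : ℝ} (hk : IsCompact k) (ha : ContinuousOn a k) (hne : ∀ x ∈ k, a x ≠ 0)
    (lam : ℝ) :
    ∃ C : NNReal, ∀ x ∈ k, LipschitzOnWith C (slopeField a H lam x) (Icc (-K) K) := by
  obtain ⟨B, hB⟩ := hk.exists_bound_of_continuousOn (ha.inv₀ hne)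
  refine ⟨(B * (α1 * (2 * K + 1) ^ (γ - 1))).toNNReal, fun x hx =>
    LipschitzOnWith.of_dist_le' fun p hp q hq => ?_⟩
  have hlip := hH.abs_sub_le hγ (x := x) (abs_le.2 hp) (abs_le.2 hq)
  calc dist (slopeField a H lam x p) (slopeField a H lam x q)
      = |(a x)⁻¹| * |H x p - H x q| := by
        rw [Real.dist_eq, ← sub_div, sub_sub_sub_cancel_left, abs_div, abs_sub_comm, div_eq_inv_mul,
          abs_inv]
    _ ≤ B * (α1 * (2 * K + 1) ^ (γ - 1) * |p - q|) :=
        mul_le_mul (hB x hx) hlip (abs_nonneg _) ((norm_nonneg _).trans (hB x hx))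
    _ = B * (α1 * (2 * K + 1) ^ (γ - 1)) * dist p q := by rw [Real.dist_eq]; ring

theorem ViscSolOn.abs_deriv_le_gradientBound (hb : ∀ x, a x ≤ b)
    (hκ : LipschitzWith κ fun x => √(a x)) (hα0 : 0 < α0) (hγ : 1 ≤ γ) (hH : HamClass α0 α1 γ H)
    (hlam : lam0 < lam) (hL : LipschitzWith L u) (hu : ViscSolOn a H lam0 {x | 0 < a x} u) {x : ℝ}
    (hx : 0 < a x) : |deriv u x| ≤ gradientBound α0 lam := by
  refine abs_le_of_forall_mul_deriv_le hκ hb (sub_pos.2 hlam)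
    (fun x hx => hu.hasDerivAt_deriv (isOpen_setOf_pos_of_continuous_sqrt hκ.continuous)
      (continuousOn_setOf_pos_of_continuous_sqrt hκ.continuous) (fun _ => id)
      (hH.continuous_uncurry hγ).continuousOn hL hx)
    (fun x hx hbig => ?_) (fun x _ => norm_deriv_le_of_lipschitz hL) hx
  rw [mul_div_cancel₀ _ hx.ne']
  linarith [hH.lt_of_gradientBound_le_abs hα0 hγ (x := x) hbig]

theorem HamClass.strictSupersolOn_const_of_gradientBound_le_abs (hH : HamClass α0 α1 γ H)
    (hα0 : 0 < α0) (hγ : 1 ≤ γ) {p : ℝ} (hp : gradientBound α0 lam ≤ |p|) :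
    StrictSupersolOn (slopeField a H lam) {x | 0 < a x} fun _ => p := fun x hx => by
  refine ⟨differentiableAt_const p, ?_⟩
  rw [deriv_const]
  exact div_neg_of_neg_of_pos (sub_neg.2 (hH.lt_of_gradientBound_le_abs hα0 hγ hp)) hx

theorem strictSubsolOn_slopeField_of_lt {v : ℝ → ℝ} (hlam : lam0 < lam)
    (hv : ∀ x, 0 < a x → HasDerivAt v (slopeField a H lam0 x (v x)) x) :
    StrictSubsolOn (slopeField a H lam) {x | 0 < a x} v := fun x hx => by
  refine ⟨(hv x hx).differentiableAt, ?_⟩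
  rw [(hv x hx).deriv]
  exact div_lt_div_of_pos_right (sub_lt_sub_right hlam _) hx

theorem HamClass.exists_hasDerivAt_slopeField_lt_and_gt (hA : IsOpen {x | 0 < a x})
    (ha : ContinuousOn a {x | 0 < a x}) (hα0 : 0 < α0) (hγ : 1 ≤ γ) (hH : HamClass α0 α1 γ H)
    {v : ℝ → ℝ} (hv : StrictSubsolOn (slopeField a H lam) {x | 0 < a x} v)
    (hvK : ∀ x, 0 < a x → |v x| ≤ gradientBound α0 lam) :
    (∃ f, ∀ x, 0 < a x → HasDerivAt f (slopeField a H lam x (f x)) x ∧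
      f x ∈ Ioo (-gradientBound α0 lam) (v x)) ∧
    ∃ f, ∀ x, 0 < a x → HasDerivAt f (slopeField a H lam x (f x)) x ∧
      f x ∈ Ioo (v x) (gradientBound α0 lam) := by
  set K := gradientBound α0 lam
  have hF := continuousOn_uncurry_slopeField (S := Icc (-K) K) (lam := lam) ha
    (fun _ hx => ne_of_gt hx) (hH.continuous_uncurry hγ).continuousOn
  have hlip : ∀ k ⊆ {x | 0 < a x}, IsCompact k →
      ∃ C : NNReal, ∀ x ∈ k, LipschitzOnWith C (slopeField a H lam x) (Icc (-K) K) :=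
    fun k hk hkc => hH.exists_lipschitzOnWith_slopeField hγ hkc (ha.mono hk)
      (fun _ hx => ne_of_gt (hk hx)) lam
  have hvmaps : MapsTo v {x | 0 < a x} (Icc (-K) K) := fun x hx => abs_le.1 (hvK x hx)
  have hK : -K ≤ K := neg_le_self (gradientBound_nonneg hα0.le)
  have htop := hH.strictSupersolOn_const_of_gradientBound_le_abs (a := a) hα0 hγ (le_abs_self K)
  have hbot := hH.strictSupersolOn_const_of_gradientBound_le_abs (a := a) hα0 hγ
    ((le_abs_self K).trans_eq (abs_neg K).symm)
  exact ⟨exists_hasDerivAt_between_of_strictSupersolOn hA hF hlip hbot hv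
      (fun _ _ => left_mem_Icc.2 hK) hvmaps fun x hx => (hvmaps hx).1,
    exists_hasDerivAt_between hA hF hlip hv htop hvmaps
      (fun _ _ => right_mem_Icc.2 hK) fun x hx => (hvmaps hx).2⟩

end ClassicalSolution

theorem statement_9_general {a : ℝ → ℝ} {H : ℝ → ℝ → ℝ} {u : ℝ → ℝ} {κ L : NNReal}
    {b α0 α1 γ lam0 lam : ℝ} (hb : ∀ x, a x ≤ b) (hκ : LipschitzWith κ fun x => √(a x))
    (hα0 : 0 < α0) (hγ : 1 ≤ γ) (hH : HamClass α0 α1 γ H) (hlam : lam0 < lam)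
    (hL : LipschitzWith L u) (hu : ViscSolOn a H lam0 {x | 0 < a x} u) :
    ∃ fm fp : ℝ → ℝ,
      ContDiffOn ℝ 1 fm {x | 0 < a x} ∧
      ContDiffOn ℝ 1 fp {x | 0 < a x} ∧
      (∀ x, 0 < a x → fm x < deriv u x ∧ deriv u x < fp x) ∧
      (∀ x, 0 < a x → a x * deriv fm x + H x (fm x) = lam) ∧
      (∀ x, 0 < a x → a x * deriv fp x + H x (fp x) = lam) ∧
      (∀ x, 0 < a x → |fm x| ≤ gradientBound α0 lam ∧ |fp x| ≤ gradientBound α0 lam) := by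
  have hA := isOpen_setOf_pos_of_continuous_sqrt hκ.continuous
  have ha := continuousOn_setOf_pos_of_continuous_sqrt hκ.continuous
  have hHcont := hH.continuous_uncurry hγ
  have hv : StrictSubsolOn (slopeField a H lam) {x | 0 < a x} (deriv u) :=
    strictSubsolOn_slopeField_of_lt hlam fun x hx =>
      hu.hasDerivAt_deriv hA ha (fun _ => id) hHcont.continuousOn hL hx
  have hvK : ∀ x, 0 < a x → |deriv u x| ≤ gradientBound α0 lam := fun x hx =>
    hu.abs_deriv_le_gradientBound hb hκ hα0 hγ hH hlam hL hx
  obtain ⟨⟨fm, hfm⟩, fp, hfp⟩ := hH.exists_hasDerivAt_slopeField_lt_and_gt hA ha hα0 hγ hv hvK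
  have hC1 : ∀ f : ℝ → ℝ, (∀ x, 0 < a x → HasDerivAt f (slopeField a H lam x (f x)) x) →
      ContDiffOn ℝ 1 f {x | 0 < a x} := fun f =>
    contDiffOn_one_of_hasDerivAt hA (continuousOn_uncurry_slopeField ha
      (fun _ hx => ne_of_gt hx) hHcont.continuousOn) (mapsTo_univ f _)
  exact ⟨fm, fp, hC1 fm fun x hx => (hfm x hx).1, hC1 fp fun x hx => (hfp x hx).1,
    fun x hx => ⟨(hfm x hx).2.2, (hfp x hx).2.1⟩,
    fun x hx => mul_deriv_add_eq_of_hasDerivAt hx.ne' (hfm x hx).1,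
    fun x hx => mul_deriv_add_eq_of_hasDerivAt hx.ne' (hfp x hx).1,
    fun x hx => ⟨abs_le.2 ⟨(hfm x hx).2.1.le, (hfm x hx).2.2.le.trans (abs_le.1 (hvK x hx)).2⟩,
      abs_le.2 ⟨(abs_le.1 (hvK x hx)).1.trans (hfp x hx).2.1.le, (hfp x hx).2.2.le⟩⟩⟩

/-- Proposition `appC prop pre-existence`: for `lam > λ₀` and `u_{λ₀}` a
Lipschitz viscosity solution at the critical level, there exist `C¹` solutions
`f⁻_lam < u'_{λ₀} < f⁺_lam` of the ODE `a f' + H(x,f) = lam` on `A := {a > 0}`, bounded by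
a constant `K_lam = K(α₀,α₁,γ,lam)` depending only on `α₀, α₁, γ` and `lam`. -/
theorem statement_9 :
    ∃ K : ℝ → ℝ → ℝ → ℝ → ℝ,
      ∀ (a : ℝ → ℝ) (H : ℝ → ℝ → ℝ) (phat : ℝ → ℝ)
        (κ α0 α1 γ η lam0 lam : ℝ) (ulam0 : ℝ → ℝ),
        (∀ x, a x ∈ Set.Icc (0:ℝ) 1) →
        0 < κ → (∀ x y : ℝ, |Real.sqrt (a x) - Real.sqrt (a y)| ≤ κ * |x - y|) →
        CondA1' a →
        0 < α0 → 0 < α1 → 2 < γ → 0 < η →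
        HamSqc α0 α1 γ η H phat →
        lam0 = CriticalValue a H →
        lam0 < lam →
        (∃ L : NNReal, LipschitzWith L ulam0) →
        ViscSolOn a H lam0 Set.univ ulam0 →
        ∃ fm fp : ℝ → ℝ,
          ContDiffOn ℝ 1 fm {x : ℝ | 0 < a x} ∧
          ContDiffOn ℝ 1 fp {x : ℝ | 0 < a x} ∧
          (∀ x : ℝ, 0 < a x → fm x < deriv ulam0 x ∧ deriv ulam0 x < fp x) ∧
          (∀ x : ℝ, 0 < a x → a x * deriv fm x + H x (fm x) = lam) ∧
          (∀ x : ℝ, 0 < a x → a x * deriv fp x + H x (fp x) = lam) ∧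
          (∀ x : ℝ, 0 < a x → |fm x| ≤ K α0 α1 γ lam ∧ |fp x| ≤ K α0 α1 γ lam) := by
  refine ⟨fun α0 _ _ lam => gradientBound α0 lam, ?_⟩
  intro a H _ κ α0 α1 γ _ _ lam u ha _ hκ _ hα0 _ hγ _ hH _ hlam ⟨L, hL⟩ hu
  exact statement_9_general (fun x => (ha x).2) (LipschitzWith.of_dist_le' hκ) hα0 (by linarith)
    hH.1 hlam hL (hu.mono (subset_univ _))
end
end
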